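/- arXiv:2303.11864 — 4 statements merged into one kernel-verified Lean document; each statement's English description precedes it below -/
import Mathlib

section
/- For every integer k ≥ 3, the meromorphically continued zeta function Z_{P_k}(s) = ∑_{n≥1} P_k(n)^{-s} satisfies Z_{P_k}(0) = 1/(2-k) and Z_{P_k}'(0) = log((k-2)/2)/(k-2) + log Γ(2/(k-2)) - log(2π). -/
open Filter Topology

/-- The `n`-th `k`-gonal number, as a real number (`n ≥ 1`). -/
noncomputable def polyNum (k n : ℕ) : ℝ :=
  (((k : ℝ) - 2) * (n : ℝ) ^ 2 - ((k : ℝ) - 4) * (n : ℝ)) / 2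


lemma aux_deriv (c : ℂ) (x : ℝ) (hx : 0 < 1 + x) :
    HasDerivAt (fun t : ℝ => (1 + (t : ℂ)) ^ c) (c * (1 + (x : ℂ)) ^ (c - 1)) x := by
  have hs : (1 + (x : ℂ)) ∈ Complex.slitPlane := by
    left; simpa using hx
  have h := (((hasDerivAt_id (x : ℂ)).const_add 1).cpow_const (c := c) hs).comp_ofReal
  simpa using h

lemma aux_taylor (e : ℝ) (he : -1 < e) (s0 : ℂ) (r : ℝ) :
    ∃ M : ℝ, 0 ≤ M ∧ ∀ s ∈ Metric.closedBall s0 r, ∀ x ∈ Set.uIcc 0 e,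
      ‖(1 + (x : ℂ)) ^ (-s) - 1 + s * x‖ ≤ M * x ^ 2 := by
  have hpos : ∀ x ∈ Set.uIcc 0 e, 0 < 1 + x := by
    intro x hx
    have := hx.1
    have h2 : -1 < min 0 e := lt_min (by norm_num) he
    linarith
  have hcont : ContinuousOn (fun p : ℂ × ℝ => (-p.1) * ((-p.1 - 1) * (1 + (p.2 : ℂ)) ^ (-p.1 - 1 - 1)))
      (Metric.closedBall s0 r ×ˢ Set.uIcc 0 e) := by
    refine ContinuousOn.mul (by fun_prop) (ContinuousOn.mul (by fun_prop) ?_)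
    refine ContinuousOn.cpow (by fun_prop) (by fun_prop) ?_
    rintro ⟨s, x⟩ ⟨_, hx⟩
    left
    simpa using hpos x hx
  obtain ⟨M, hM⟩ := ((isCompact_closedBall s0 r).prod isCompact_uIcc).exists_bound_of_continuousOn hcont
  refine ⟨max M 0, le_max_right _ _, fun s hs x hx => ?_⟩
  have hsub : Set.uIcc 0 x ⊆ Set.uIcc 0 e := Set.uIcc_subset_uIcc Set.left_mem_uIcc hx
  have h1 : ∀ t ∈ Set.uIcc 0 e, ‖(-s) * (1 + (t : ℂ)) ^ (-s - 1) + s‖ ≤ max M 0 * |t| := by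
    intro t ht
    have := (convex_uIcc 0 e).norm_image_sub_le_of_norm_hasDerivWithin_le
      (f := fun t : ℝ => (-s) * (1 + (t : ℂ)) ^ (-s - 1))
      (C := max M 0) (fun y hy => ((aux_deriv (-s - 1) y (hpos y hy)).const_mul (-s)).hasDerivWithinAt)
      (fun y hy => (hM (s, y) ⟨hs, hy⟩).trans (le_max_left _ _)) Set.left_mem_uIcc ht
    simpa using this
  have h2 := (convex_uIcc 0 x).norm_image_sub_le_of_norm_hasDerivWithin_le
      (f := fun t : ℝ => (1 + (t : ℂ)) ^ (-s) - 1 + s * (t : ℂ))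
      (C := max M 0 * |x|)
      (fun y hy => (((aux_deriv (-s) y (hpos y (hsub hy))).sub_const 1).add
        ((hasDerivAt_id (y : ℂ)).comp_ofReal.const_mul s)).hasDerivWithinAt)
      (fun y hy => by
        have h3 := h1 y (hsub hy)
        have h4 : |y| ≤ |x| := by
          have := Set.abs_sub_left_of_mem_uIcc hy
          simpa using this
        rw [mul_one]
        exact h3.trans (by gcongr)) Set.left_mem_uIcc Set.right_mem_uIcc
  have h5 : max M 0 * |x| * |x| = max M 0 * x ^ 2 := by
    rw [mul_assoc, ← sq, sq_abs]
  simpa [h5] using h2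

/-- Remainder term. -/
noncomputable def remT (e : ℝ) (n : ℕ) (s : ℂ) : ℂ :=
  ((n : ℂ) + 1) ^ (-(2 * s)) *
    ((1 + ((e / ((n : ℝ) + 1) : ℝ) : ℂ)) ^ (-s) - 1 + s * ((e / ((n : ℝ) + 1) : ℝ) : ℂ))

lemma aux_mem (e : ℝ) (n : ℕ) : e / ((n : ℝ) + 1) ∈ Set.uIcc 0 e := by
  have h1 : (1 : ℝ) ≤ (n : ℝ) + 1 := by simp
  rcases le_total 0 e with h | h
  · rw [Set.uIcc_of_le h]
    exact ⟨by positivity, div_le_self h h1⟩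
  · rw [Set.uIcc_of_ge h]
    refine ⟨?_, div_nonpos_of_nonpos_of_nonneg h (by linarith)⟩
    rw [le_div_iff₀ (by linarith)]
    nlinarith

lemma aux_pos (e : ℝ) (he : -1 < e) (n : ℕ) : 0 < 1 + e / ((n : ℝ) + 1) := by
  have h1 : (1 : ℝ) ≤ (n : ℝ) + 1 := by simp
  have : 1 + e / ((n : ℝ) + 1) = ((n : ℝ) + 1 + e) / ((n : ℝ) + 1) := by field_simp
  rw [this]
  apply div_pos <;> linarith

lemma aux_bound (e : ℝ) (he : -1 < e) (s0 : ℂ) (hs0 : -(1 / 2) < s0.re) :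
    ∃ r > 0, ∃ u : ℕ → ℝ, Summable u ∧ ∀ n, ∀ s ∈ Metric.ball s0 r, ‖remT e n s‖ ≤ u n := by
  set r := (s0.re + 1 / 2) / 2 with hr
  have hr0 : 0 < r := by rw [hr]; linarith
  obtain ⟨M, hM0, hM⟩ := aux_taylor e he s0 r
  refine ⟨r, hr0, fun n => (M * e ^ 2) * ((n + 1 : ℕ) : ℝ) ^ (-(2 * (s0.re - r)) - 2), ?_, ?_⟩
  · apply Summable.mul_left
    rw [summable_nat_add_iff (f := fun n : ℕ => (n : ℝ) ^ (-(2 * (s0.re - r)) - 2)) 1,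
      Real.summable_nat_rpow]
    linarith
  · intro n s hs
    have hn : (0 : ℝ) < (n : ℝ) + 1 := by positivity
    have h1 := hM s (Metric.ball_subset_closedBall hs) _ (aux_mem e n)
    rw [remT, norm_mul]
    have h2 : ‖((n : ℂ) + 1) ^ (-(2 * s))‖ ≤ ((n : ℝ) + 1) ^ (-(2 * (s0.re - r))) := by
      have : ((n : ℂ) + 1) = (((n : ℝ) + 1 : ℝ) : ℂ) := by push_cast; rfl
      rw [this, Complex.norm_cpow_eq_rpow_re_of_pos hn]
      apply Real.rpow_le_rpow_of_exponent_le (by simp)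
      have h3 : |(s - s0).re| < r := (Complex.abs_re_le_norm _).trans_lt (by simpa [dist_eq_norm] using hs)
      have h4 := (abs_lt.mp h3).1
      simp at h4 ⊢
      linarith
    calc _ ≤ ((n : ℝ) + 1) ^ (-(2 * (s0.re - r))) * (M * (e / ((n : ℝ) + 1)) ^ 2) := by gcongr
      _ = _ := by
        push_cast
        rw [Real.rpow_sub hn, Real.rpow_two]
        field_simp

lemma aux_diff (e : ℝ) (he : -1 < e) (n : ℕ) : Differentiable ℂ (remT e n) := by
  have h1 : ((n : ℂ) + 1) ≠ 0 := by exact_mod_cast Nat.succ_ne_zero n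
  have h2 : (1 + ((e / ((n : ℝ) + 1) : ℝ) : ℂ)) ≠ 0 := by
    exact_mod_cast (aux_pos e he n).ne'
  unfold remT
  refine Differentiable.mul ?_ (Differentiable.add (Differentiable.sub ?_ (by fun_prop)) (by fun_prop))
  · exact Differentiable.const_cpow (by fun_prop) (Or.inl h1)
  · exact Differentiable.const_cpow (by fun_prop) (Or.inl h2)

lemma aux_deriv0 (e : ℝ) (he : -1 < e) (n : ℕ) :
    deriv (remT e n) 0 = ((e / ((n : ℝ) + 1) - Real.log (1 + e / ((n : ℝ) + 1)) : ℝ) : ℂ) := by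
  have h1 : ((n : ℂ) + 1) ≠ 0 := by exact_mod_cast Nat.succ_ne_zero n
  have h2 : (1 + ((e / ((n : ℝ) + 1) : ℝ) : ℂ)) ≠ 0 := by
    exact_mod_cast (aux_pos e he n).ne'
  have hA := (((hasDerivAt_id (0 : ℂ)).const_mul 2).fun_neg).const_cpow (c := (n : ℂ) + 1) (Or.inl h1)
  have hB := ((hasDerivAt_id (0 : ℂ)).fun_neg).const_cpow
    (c := 1 + ((e / ((n : ℝ) + 1) : ℝ) : ℂ)) (Or.inl h2)
  have hC := hA.mul ((hB.sub_const 1).add ((hasDerivAt_id (0 : ℂ)).mul_const ((e / ((n : ℝ) + 1) : ℝ) : ℂ)))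
  have hD : HasDerivAt (remT e n) _ 0 := hC
  rw [hD.deriv]
  rw [Complex.ofReal_sub, Complex.ofReal_log (aux_pos e he n).le]
  simp
  ring

lemma aux_gamma (b : ℝ) (hb : 0 < b) :
    Tendsto (fun N : ℕ => ∑ n ∈ Finset.range N,
      ((b - 1) / ((n : ℝ) + 1) - Real.log (1 + (b - 1) / ((n : ℝ) + 1)))) atTop
      (𝓝 ((b - 1) * Real.eulerMascheroniConstant + Real.log (Real.Gamma b))) := by
  have h1 := Real.tendsto_harmonic_sub_log.const_mul (b - 1)
  have h2 := Real.BohrMollerup.tendsto_log_gamma hb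
  have h3 : Tendsto (fun N : ℕ => Real.log (b + N) - Real.log N) atTop (𝓝 0) := by
    have h4 : Tendsto (fun N : ℕ => Real.log (b / N + 1)) atTop (𝓝 0) := by
      have h5 : Tendsto (fun N : ℕ => b / (N : ℝ) + 1) atTop (𝓝 1) := by
        simpa using (tendsto_const_div_atTop_nhds_zero_nat b).add_const 1
      simpa using h5.log one_ne_zero
    refine h4.congr' ?_
    filter_upwards [eventually_gt_atTop 0] with N hN
    have hN' : (0 : ℝ) < N := by exact_mod_cast hN
    rw [← Real.log_div (by positivity) (by positivity)]
    congr 1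
    field_simp
  have h := (h1.add h2).add h3
  rw [add_zero] at h
  refine h.congr fun N => ?_
  have hs : ∑ n ∈ Finset.range N,
      ((b - 1) / ((n : ℝ) + 1) - Real.log (1 + (b - 1) / ((n : ℝ) + 1))) =
      (b - 1) * (harmonic N : ℚ) + Real.log (N.factorial) - ∑ n ∈ Finset.range N, Real.log (b + n) := by
    induction N with
    | zero => simp
    | succ N ih =>
      have hN : (0 : ℝ) < (N : ℝ) + 1 := by positivity
      rw [Finset.sum_range_succ, Finset.sum_range_succ, ih, harmonic_succ, Nat.factorial_succ]
      push_cast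
      rw [Real.log_mul (by positivity) (by positivity)]
      have : 1 + (b - 1) / ((N : ℝ) + 1) = (b + N) / ((N : ℝ) + 1) := by field_simp; ring
      rw [this, Real.log_div (by positivity) (by positivity)]
      field_simp
      ring
  rw [hs, Real.BohrMollerup.logGammaSeq, Finset.sum_range_succ]
  ring


lemma aux_tsum_diff (e : ℝ) (he : -1 < e) (s0 : ℂ) (hs0 : -(1 / 2) < s0.re) :
    DifferentiableAt ℂ (fun s => ∑' n, remT e n s) s0 := by
  obtain ⟨r, hr, u, hu, hb⟩ := aux_bound e he s0 hs0
  exact (Complex.differentiableOn_tsum_of_summable_norm hu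
    (fun n => (aux_diff e he n).differentiableOn) Metric.isOpen_ball hb).differentiableAt
    (Metric.ball_mem_nhds _ hr)

lemma aux_summable (e : ℝ) (he : -1 < e) (s0 : ℂ) (hs0 : -(1 / 2) < s0.re) :
    Summable (fun n => remT e n s0) := by
  obtain ⟨r, hr, u, hu, hb⟩ := aux_bound e he s0 hs0
  exact Summable.of_norm_bounded hu (fun n => hb n s0 (Metric.mem_ball_self hr))

lemma aux_tsum_deriv (b : ℝ) (hb : 0 < b) :
    deriv (fun s => ∑' n, remT (b - 1) n s) 0 =
      (((b - 1) * Real.eulerMascheroniConstant + Real.log (Real.Gamma b) : ℝ) : ℂ) := by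
  have he : -1 < b - 1 := by linarith
  obtain ⟨r, hr, u, hu, hbd⟩ := aux_bound (b - 1) he 0 (by norm_num)
  have h := Complex.hasSum_deriv_of_summable_norm hu
    (fun n => (aux_diff (b - 1) he n).differentiableOn) Metric.isOpen_ball hbd
    (Metric.mem_ball_self hr)
  refine tendsto_nhds_unique h.tendsto_sum_nat ?_
  have h2 := (Complex.continuous_ofReal.tendsto _).comp (aux_gamma b hb)
  refine h2.congr fun N => ?_
  simp only [aux_deriv0 (b - 1) he, Function.comp, Complex.ofReal_sum]

/-- The explicit continuation. -/
noncomputable def contF (c b : ℝ) (s : ℂ) : ℂ :=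
  (c : ℂ) ^ (-s) * (riemannZeta (2 * s) - ((b - 1 : ℝ) : ℂ) / 2 * riemannZeta₁ (2 * s + 1)
    + ∑' n, remT (b - 1) n s)

lemma aux_zeta_diff (s : ℂ) (h : s ≠ 1 / 2) : DifferentiableAt ℂ (fun s => riemannZeta (2 * s)) s := by
  have h2 : 2 * s ≠ 1 := fun h3 => h (by rw [← h3]; ring)
  exact (differentiableAt_riemannZeta h2).comp s (by fun_prop)

lemma contF_diff (c b : ℝ) (hc : 0 < c) (hb : 0 < b) (s : ℂ) (hs : -(1 / 2) < s.re)
    (h : s ≠ 1 / 2) : DifferentiableAt ℂ (contF c b) s := by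
  have hc' : (c : ℂ) ≠ 0 := by exact_mod_cast hc.ne'
  unfold contF
  refine DifferentiableAt.mul (DifferentiableAt.const_cpow (by fun_prop) (Or.inl hc'))
    (DifferentiableAt.add (DifferentiableAt.sub (aux_zeta_diff s h) ?_) (aux_tsum_diff _ (by linarith) s hs))
  refine DifferentiableAt.const_mul ?_ _
  exact (differentiable_riemannZeta₁ _).comp s (by fun_prop)

lemma contF_series (c b : ℝ) (hc : 0 < c) (hb : 0 < b) (s : ℂ) (hs : 1 / 2 < s.re) :
    contF c b s = ∑' n : ℕ, ((c * ((n : ℝ) + 1) * ((n : ℝ) + b) : ℝ) : ℂ) ^ (-s) := by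
  have h2 : 1 < (2 * s).re := by simp; linarith
  have h3 : 1 < (2 * s + 1).re := by simp; linarith
  have hsum : ∀ w : ℂ, 1 < w.re → Summable (fun n : ℕ => 1 / ((n : ℂ) + 1) ^ w) := by
    intro w hw
    have := (summable_nat_add_iff 1).mpr (Complex.summable_one_div_nat_cpow.mpr hw)
    simpa using this
  have he : -1 < b - 1 := by linarith
  have hs0 : s ≠ 0 := by rintro rfl; norm_num at hs
  have hz : ((b - 1 : ℝ) : ℂ) / 2 * riemannZeta₁ (2 * s + 1) =
      s * ((b - 1 : ℝ) : ℂ) * riemannZeta (2 * s + 1) := by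
    rw [riemannZeta_eq_inv_sub_mul (s := 2 * s + 1) (by simpa using hs0)]
    field_simp
    ring
  rw [contF, hz, zeta_eq_tsum_one_div_nat_add_one_cpow h2, zeta_eq_tsum_one_div_nat_add_one_cpow h3,
    ← tsum_mul_left, ← (hsum _ h2).tsum_sub ((hsum _ h3).mul_left _),
    ← ((hsum _ h2).sub ((hsum _ h3).mul_left _)).tsum_add (aux_summable _ he s (by linarith)),
    ← tsum_mul_left]
  refine tsum_congr fun n => ?_
  have hn : (0 : ℝ) < (n : ℝ) + 1 := by positivity
  have hn' : ((n : ℂ) + 1) ≠ 0 := by exact_mod_cast Nat.succ_ne_zero n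
  have hx := aux_pos (b - 1) he n
  have hp : c * ((n : ℝ) + 1) * ((n : ℝ) + b) =
      c * (((n : ℝ) + 1) * (((n : ℝ) + 1) * (1 + (b - 1) / ((n : ℝ) + 1)))) := by
    field_simp; ring
  rw [hp, Complex.ofReal_mul, Complex.mul_cpow_ofReal_nonneg hc.le (by positivity),
    Complex.ofReal_mul, Complex.mul_cpow_ofReal_nonneg hn.le (by positivity),
    Complex.ofReal_mul, Complex.mul_cpow_ofReal_nonneg hn.le hx.le]
  congr 1
  have e1 : (((n : ℝ) + 1 : ℝ) : ℂ) = (n : ℂ) + 1 := by push_cast; rfl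
  have e2 : ((n : ℂ) + 1) ^ (-(2 * s)) = ((n : ℂ) + 1) ^ (-s) * ((n : ℂ) + 1) ^ (-s) := by
    rw [← Complex.cpow_add _ _ hn']; congr 1; ring
  have e3 : 1 / ((n : ℂ) + 1) ^ (2 * s) = ((n : ℂ) + 1) ^ (-(2 * s)) := by
    rw [Complex.cpow_neg, one_div]
  have e4 : 1 / ((n : ℂ) + 1) ^ (2 * s + 1) = ((n : ℂ) + 1) ^ (-(2 * s)) / ((n : ℂ) + 1) := by
    rw [Complex.cpow_neg, Complex.cpow_add _ _ hn', Complex.cpow_one]; field_simp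
  rw [e3, e4, remT, e1, ← mul_assoc, ← e2]
  push_cast
  field_simp
  ring

lemma contF_zero (c b : ℝ) : contF c b 0 = -(b : ℂ) / 2 := by
  have : ∀ n, remT (b - 1) n 0 = 0 := by intro n; simp [remT]
  simp [contF, this, riemannZeta_zero]
  ring

lemma contF_deriv (c b : ℝ) (hc : 0 < c) (hb : 0 < b) : deriv (contF c b) 0 =
    ((Real.log c * b / 2 + Real.log (Real.Gamma b) - Real.log (2 * Real.pi) : ℝ) : ℂ) := by
  have hc' : (c : ℂ) ≠ 0 := by exact_mod_cast hc.ne'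
  have h1 : HasDerivAt (fun s => riemannZeta (2 * s)) (deriv riemannZeta 0 * 2) 0 := by
    have hz : HasDerivAt riemannZeta (deriv riemannZeta 0) (2 * 0) := by
      rw [mul_zero]; exact (differentiableAt_riemannZeta (by norm_num)).hasDerivAt
    have := HasDerivAt.comp (0 : ℂ) hz ((hasDerivAt_id' (0 : ℂ)).const_mul 2)
    rw [mul_one] at this
    exact this
  have h2 : HasDerivAt (fun s => riemannZeta₁ (2 * s + 1)) (Real.eulerMascheroniConstant * 2) 0 := by
    have hz : HasDerivAt riemannZeta₁ (Real.eulerMascheroniConstant) (2 * 0 + 1) := by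
      rw [mul_zero, zero_add, ← deriv_riemannZeta₁_one]; exact (differentiable_riemannZeta₁ _).hasDerivAt
    have := HasDerivAt.comp (0 : ℂ) hz (((hasDerivAt_id' (0 : ℂ)).const_mul 2).add_const 1)
    rw [mul_one] at this
    exact this
  have h3 := (aux_tsum_diff (b - 1) (by linarith) 0 (by norm_num)).hasDerivAt
  rw [aux_tsum_deriv b hb] at h3
  have h4 := ((hasDerivAt_id (0 : ℂ)).fun_neg).const_cpow (c := (c : ℂ)) (Or.inl hc')
  have h5 : HasDerivAt (contF c b) _ 0 := h4.mul ((h1.sub (h2.const_mul (((b - 1 : ℝ) : ℂ) / 2))).add h3)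
  have : ∀ n, remT (b - 1) n 0 = 0 := by intro n; simp [remT]
  have hl : Complex.log (2 * (Real.pi : ℂ)) = ((Real.log (2 * Real.pi) : ℝ) : ℂ) := by
    rw [Complex.ofReal_log (by positivity)]; push_cast; rfl
  rw [h5.deriv, deriv_riemannZeta_zero, hl]
  simp [this, riemannZeta_zero, ← Complex.ofReal_log hc.le]
  ring

lemma aux_preconn : IsPreconnected
    (({s : ℂ | 1 / 2 < s.re} ∪ ({s : ℂ | -(1 / 2) < s.re} ∩ {s : ℂ | 0 < s.im})) ∪
      ({s : ℂ | -(1 / 2) < s.re} ∩ {s : ℂ | s.re < 1 / 2})) := by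
  have c1 := (convex_halfSpace_re_gt (1 / 2)).isPreconnected
  have c2 := ((convex_halfSpace_re_gt (-(1 / 2))).inter (convex_halfSpace_im_gt 0)).isPreconnected
  have c3 := ((convex_halfSpace_re_gt (-(1 / 2))).inter (convex_halfSpace_re_lt (1 / 2))).isPreconnected
  refine IsPreconnected.union Complex.I (Or.inr ?_) ?_ (IsPreconnected.union (1 + Complex.I) ?_ ?_ c1 c2) c3
  all_goals norm_num

theorem stmt5 (k : ℕ) (hk : 3 ≤ k) (Z : ℂ → ℂ)
    (hhol : DifferentiableOn ℂ Z {s : ℂ | -(1 / 2) < s.re ∧ s ≠ 1 / 2})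
    (hser : ∀ s : ℂ, 1 / 2 < s.re →
      Z s = ∑' n : ℕ, ((polyNum k (n + 1) : ℝ) : ℂ) ^ (-s)) :
    Z 0 = 1 / (2 - (k : ℂ)) ∧
    deriv Z 0 =
      ((Real.log (((k : ℝ) - 2) / 2) / ((k : ℝ) - 2)
        + Real.log (Real.Gamma (2 / ((k : ℝ) - 2))) - Real.log (2 * Real.pi) : ℝ) : ℂ) := by
  have hk' : (3 : ℝ) ≤ k := by exact_mod_cast hk
  have hk2 : 0 < (k : ℝ) - 2 := by linarith
  set c : ℝ := ((k : ℝ) - 2) / 2 with hc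
  set b : ℝ := 2 / ((k : ℝ) - 2) with hb
  have hc0 : 0 < c := by positivity
  have hb0 : 0 < b := by positivity
  set U : Set ℂ := (({s : ℂ | 1 / 2 < s.re} ∪ ({s : ℂ | -(1 / 2) < s.re} ∩ {s : ℂ | 0 < s.im})) ∪
      ({s : ℂ | -(1 / 2) < s.re} ∩ {s : ℂ | s.re < 1 / 2})) with hU
  have o1 : ∀ a : ℝ, IsOpen {s : ℂ | a < s.re} := fun a => isOpen_lt continuous_const Complex.continuous_re
  have o2 : ∀ a : ℝ, IsOpen {s : ℂ | s.re < a} := fun a => isOpen_lt Complex.continuous_re continuous_const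
  have o3 : ∀ a : ℝ, IsOpen {s : ℂ | a < s.im} := fun a => isOpen_lt continuous_const Complex.continuous_im
  have hUo : IsOpen U := ((o1 _).union ((o1 _).inter (o3 _))).union ((o1 _).inter (o2 _))
  have hUs : U ⊆ {s : ℂ | -(1 / 2) < s.re ∧ s ≠ 1 / 2} := by
    rintro s ((h | ⟨h, h'⟩) | ⟨h, h'⟩)
    · change 1 / 2 < s.re at h
      refine ⟨by linarith, ?_⟩
      rintro rfl
      norm_num at h
    · refine ⟨h, ?_⟩
      rintro rfl
      norm_num at h'
    · refine ⟨h, ?_⟩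
      rintro rfl
      norm_num at h'
  have hF : DifferentiableOn ℂ (contF c b) U := fun s hs =>
    (contF_diff c b hc0 hb0 s (hUs hs).1 (hUs hs).2).differentiableWithinAt
  have hev : Z =ᶠ[𝓝 1] contF c b := by
    filter_upwards [(o1 (1 / 2)).mem_nhds (show (1 : ℂ) ∈ {s : ℂ | 1 / 2 < s.re} by norm_num)] with s hs
    rw [hser s hs, contF_series c b hc0 hb0 s hs]
    refine tsum_congr fun n => ?_
    congr 2
    rw [polyNum, hc, hb]
    push_cast
    field_simp
    ring
  have h0U : (0 : ℂ) ∈ U := by right; norm_num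
  have h1U : (1 : ℂ) ∈ U := by left; left; norm_num
  have heq := ((hhol.mono hUs).analyticOnNhd hUo).eqOn_of_preconnected_of_eventuallyEq
    (hF.analyticOnNhd hUo) aux_preconn h1U hev
  have hev0 : Z =ᶠ[𝓝 0] contF c b := by
    filter_upwards [hUo.mem_nhds h0U] with s hs using heq hs
  constructor
  · rw [hev0.eq_of_nhds, contF_zero, hb]
    have h6 : (k : ℂ) - 2 ≠ 0 := by exact_mod_cast hk2.ne'
    have h7 : 2 - (k : ℂ) ≠ 0 := by rw [← neg_sub]; exact neg_ne_zero.mpr h6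
    push_cast
    field_simp
    ring
  · rw [hev0.deriv_eq, contF_deriv c b hc0 hb0]
    congr 3
    rw [hb]
    field_simp
end

section
/- The Witten zeta function of so(5), defined for Re(s) > 1/2 by ζ_{so(5)}(s) = 6^s ∑_{m,n ≥ 1} 1/( m^s n^s (m+n)^s (m+2n)^s ), satisfies ζ_{so(5)}(0) = 3/8 after meromorphic continuation. -/
open Filter Topology

noncomputable def wq (a b : ℝ) (k n : ℕ) : ℝ :=
  ((k : ℝ) + 1) * ((n : ℝ) + 1) * ((n : ℝ) + 1 + a * ((k : ℝ) + 1)) * ((n : ℝ) + 1 + b * ((k : ℝ) + 1))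

noncomputable def wterm (a b : ℝ) (s : ℂ) (n : ℕ) (x : ℂ) : ℂ :=
  x ^ (-s) * ((n : ℂ) + 1) ^ (-(3 * s)) *
    ((1 + a * (x / ((n : ℂ) + 1))) ^ (-s) * (1 + b * (x / ((n : ℂ) + 1))) ^ (-s) - 1)

noncomputable def walt (u : ℕ → ℂ) : ℂ := ∑' k, (-1) ^ k * u k

lemma walt_eq {u : ℕ → ℂ} (hu : Summable u) :
    walt u = ∑' k, u k - 2 * ∑' k, u (2 * k + 1) := by
  have hinj0 : Function.Injective (fun k : ℕ => 2 * k) := fun x y h => by simpa using h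
  have hinj1 : Function.Injective (fun k : ℕ => 2 * k + 1) := fun x y h => by simpa using h
  have h0 : Summable fun k => u (2 * k) := hu.comp_injective hinj0
  have h1 : Summable fun k => u (2 * k + 1) := hu.comp_injective hinj1
  rw [walt, ← tsum_even_add_odd h0 h1, ← tsum_even_add_odd]
  · simp only [pow_succ, pow_mul]
    simp [tsum_neg]
    ring
  · simpa [pow_mul] using h0
  · simpa [pow_mul, pow_succ] using h1.neg

lemma wsummable_alt {u : ℕ → ℂ} (hu : Summable u) : Summable (fun k => (-1 : ℂ) ^ k * u k) := by
  apply Summable.of_norm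
  simpa using hu.norm

lemma walt_step {u : ℕ → ℂ} (hu : Summable u) :
    walt u = u 0 / 2 - walt (fun k => u (k + 1) - u k) / 2 := by
  have h1 : Summable fun k => u (k + 1) := (summable_nat_add_iff 1).2 hu
  have e1 : walt (fun k => u (k + 1) - u k) = walt (fun k => u (k + 1)) - walt u := by
    rw [walt, walt, walt, ← (wsummable_alt h1).tsum_sub (wsummable_alt hu)]
    simp only [mul_sub]
  have e2 : walt u = u 0 - walt (fun k => u (k + 1)) := by
    rw [walt, (wsummable_alt hu).tsum_eq_zero_add, walt, sub_eq_add_neg, ← tsum_neg]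
    simp [pow_succ]
  rw [e1]
  linear_combination (1/2 : ℂ) * e2

noncomputable def wd3 (u : ℕ → ℂ) (k : ℕ) : ℂ := u (k + 3) - 3 * u (k + 2) + 3 * u (k + 1) - u k

lemma walt_euler {u : ℕ → ℂ} (hu : Summable u) :
    walt u = u 0 / 2 - (u 1 - u 0) / 4 + (u 2 - 2 * u 1 + u 0) / 8 - walt (wd3 u) / 8 := by
  have h1 : Summable fun k => u (k + 1) - u k := ((summable_nat_add_iff 1).2 hu).sub hu
  have h2 := ((summable_nat_add_iff 1).2 h1).sub h1
  rw [walt_step hu, walt_step h1, walt_step h2]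
  have : wd3 u = fun k => (u (k + 1 + 1 + 1) - u (k + 1 + 1) - (u (k + 1 + 1) - u (k + 1)) -
      (u (k + 1 + 1) - u (k + 1) - (u (k + 1) - u k))) := by
    funext k; simp only [wd3]; ring
  rw [this]
  ring

/-- Third difference bound by Cauchy estimates. -/
lemma wstep_bound {g : ℂ → ℂ} {lo hi B : ℝ} (hlo : 0 < lo)
    (hg : DifferentiableOn ℂ g {z | 0 < z.re})
    (hB : ∀ x : ℝ, lo ≤ x → x ≤ hi + 1 → ‖deriv g x‖ ≤ B) :
    ∀ x : ℝ, lo ≤ x → x ≤ hi → ‖g (x + 1) - g x‖ ≤ B := by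
  intro x hx1 hx2
  have hopen : IsOpen {z : ℂ | 0 < z.re} := isOpen_lt continuous_const Complex.continuous_re
  have hmem : ∀ z ∈ segment ℝ (x : ℂ) (x + 1), ∃ y : ℝ, lo ≤ y ∧ y ≤ hi + 1 ∧ z = y := by
    rintro z ⟨p, q, hp, hq, hpq, rfl⟩
    refine ⟨x + q, by linarith, by linarith, ?_⟩
    have : p = 1 - q := by linarith
    subst this
    simp
    ring
  have := (convex_segment (𝕜 := ℝ) (x : ℂ) (x + 1)).norm_image_sub_le_of_norm_deriv_le (f := g) (C := B)
    (x := (x : ℂ)) (y := (x : ℂ) + 1) ?_ ?_ (left_mem_segment _ _ _) (right_mem_segment _ _ _)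
  · simpa using this
  · intro z hz
    obtain ⟨y, h1, h2, rfl⟩ := hmem z hz
    exact hg.differentiableAt (hopen.mem_nhds (by simp; linarith))
  · intro z hz
    obtain ⟨y, h1, h2, rfl⟩ := hmem z hz
    exact hB y h1 h2

lemma wdiff_shift {g : ℂ → ℂ} (hg : DifferentiableOn ℂ g {z | 0 < z.re}) :
    DifferentiableOn ℂ (fun z => g (z + 1) - g z) {z | 0 < z.re} := by
  refine DifferentiableOn.sub ?_ hg
  refine hg.comp (by fun_prop) ?_
  intro z hz
  simp at hz ⊢
  linarith

lemma wderiv_shift {g : ℂ → ℂ} (hg : DifferentiableOn ℂ g {z | 0 < z.re}) (z : ℂ) (hz : 0 < z.re) :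
    deriv (fun z => g (z + 1) - g z) z = deriv g (z + 1) - deriv g z := by
  have hopen : IsOpen {z : ℂ | 0 < z.re} := isOpen_lt continuous_const Complex.continuous_re
  have h1 : DifferentiableAt ℂ g z := hg.differentiableAt (hopen.mem_nhds hz)
  have h2 : DifferentiableAt ℂ g (z + 1) :=
    hg.differentiableAt (hopen.mem_nhds (by simp at hz ⊢; linarith))
  have h3 : DifferentiableAt ℂ (fun z => g (z + 1)) z := by
    exact DifferentiableAt.comp z h2 (by fun_prop)
  rw [deriv_fun_sub h3 h1, deriv_comp_add_const]

lemma wD3 {g : ℂ → ℂ} {B : ℝ} (hg : DifferentiableOn ℂ g {z | 0 < z.re})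
    (hB0 : 0 ≤ B) (hB : ∀ z : ℂ, 1 / 2 ≤ z.re → ‖g z‖ ≤ B * ‖z‖) (m : ℝ) (hm : 1 ≤ m) :
    ‖g (m + 3) - 3 * g (m + 2) + 3 * g (m + 1) - g m‖ ≤ 240 * B / m ^ 2 := by
  have hopen : IsOpen {z : ℂ | 0 < z.re} := isOpen_lt continuous_const Complex.continuous_re
  have hg1 := hg.deriv hopen
  have hg2 := hg1.deriv hopen
  have key : ∀ x : ℝ, m ≤ x → x ≤ m + 3 → ‖deriv (deriv (deriv g)) x‖ ≤ 240 * B / m ^ 2 := by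
    intro x h1 h2
    have hball : ∀ z ∈ Metric.closedBall (x : ℂ) (m / 2), m / 2 ≤ z.re := by
      intro z hz
      have := (Complex.abs_re_le_norm (z - x)).trans (by simpa [dist_eq_norm] using hz)
      rw [abs_le] at this
      simp at this
      linarith
    have := Complex.norm_iteratedDeriv_le_of_forall_mem_sphere_norm_le (f := g) (c := (x : ℂ)) (R := m / 2)
      (C := B * (5 * m)) 3 (by positivity) ?_ ?_
    · rw [iteratedDeriv_eq_iterate] at this
      refine this.trans (le_of_eq ?_)
      simp [Nat.factorial]
      field_simp
      ring
    · refine DifferentiableOn.diffContOnCl (hg.mono ?_)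
      rw [closure_ball _ (by positivity)]
      intro z hz
      have := hball z hz
      simp; linarith
    · intro z hz
      have hz' := Metric.sphere_subset_closedBall hz
      refine (hB z (by linarith [hball z hz'])).trans ?_
      gcongr
      have h3 : ‖z - x‖ ≤ m / 2 := by simpa [dist_eq_norm] using hz'
      have h4 : ‖(x : ℂ)‖ = x := by simp; linarith
      have h5 := norm_le_norm_add_norm_sub' z x
      have : m + 3 + m/2 ≤ 5 * m + (3 - 3 * m) := by linarith
      linarith
  have s1 := wstep_bound (g := deriv (deriv g)) (lo := m) (hi := m + 2) (by linarith) hg2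
    (by intro x h1 h2; exact key x h1 (by linarith))
  have s2 := wstep_bound (g := fun z => deriv g (z + 1) - deriv g z) (lo := m) (hi := m + 1)
    (by linarith) (wdiff_shift hg1)
    (by
      intro x h1 h2
      rw [wderiv_shift hg1 _ (by simp; linarith)]
      exact s1 x h1 (by linarith))
  have s3 := wstep_bound (g := fun z => (g (z + 1 + 1) - g (z + 1)) - (g (z + 1) - g z)) (lo := m) (hi := m)
    (by linarith) (wdiff_shift (wdiff_shift hg))
    (by
      intro x h1 h2
      rw [wderiv_shift (g := fun z => g (z + 1) - g z) (wdiff_shift hg) _ (by simp; linarith),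
        wderiv_shift hg _ (by simp; linarith), wderiv_shift hg _ (by simp; linarith)]
      exact s2 x h1 (by linarith)) m le_rfl le_rfl
  refine le_trans (le_of_eq ?_) s3
  congr 1
  have e2 : (m : ℂ) + 1 + 1 = m + 2 := by ring
  have e3 : (m : ℂ) + 2 + 1 = m + 3 := by ring
  simp only [e2, e3]
  ring

lemma wexp_bound {z : ℂ} {B : ℝ} (hB : 0 ≤ B) (hz : z.re ≤ B) :
    ‖Complex.exp z - 1‖ ≤ Real.exp B * ‖z‖ := by
  have := (convex_halfSpace_re_le B).norm_image_sub_le_of_norm_deriv_le (f := Complex.exp)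
    (C := Real.exp B) (x := 0) (y := z) (fun x _ => Complex.differentiable_exp x) ?_ (by simpa using hB) hz
  · simpa using this
  · intro x hx
    simp only [Complex.deriv_exp, Complex.norm_exp]
    exact Real.exp_le_exp.2 hx

lemma wlog_bound {z : ℂ} (hz : 0 ≤ z.re) : ‖Complex.log (1 + z)‖ ≤ ‖z‖ := by
  have hs : ∀ x ∈ {c : ℂ | 1 ≤ c.re}, x ∈ Complex.slitPlane := by
    intro x hx; left; simp at hx; linarith
  have := (convex_halfSpace_re_ge (1 : ℝ)).norm_image_sub_le_of_norm_deriv_le (f := Complex.log)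
    (C := 1) (x := 1) (y := 1 + z) (fun x hx => (Complex.hasDerivAt_log (hs x hx)).differentiableAt) ?_
      (by simp) (by simpa using hz)
  · simpa using this
  · intro x hx
    rw [(Complex.hasDerivAt_log (hs x hx)).deriv, norm_inv]
    apply inv_le_one_of_one_le₀
    exact le_trans hx (Complex.re_le_norm x)

noncomputable def wC (a b : ℝ) (s : ℂ) : ℝ :=
  Real.exp (3 * Real.pi * |s.im|) * 2 ^ s.re * ‖s‖ * (a + b)

lemma wterm_bound {a b : ℝ} (ha : 0 < a) (hb : 0 < b) {s : ℂ} (hs : 0 < s.re) (n : ℕ) {x : ℂ}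
    (hx : 1 / 2 ≤ x.re) :
    ‖wterm a b s n x‖ ≤ wC a b s * ((n : ℝ) + 1) ^ (-(1 + 3 * s.re)) * ‖x‖ := by
  have hn : (0 : ℝ) < (n : ℝ) + 1 := by positivity
  have hnc : ((n : ℂ) + 1) = (((n : ℝ) + 1 : ℝ) : ℂ) := by push_cast; ring
  have hx0 : x ≠ 0 := by rintro rfl; norm_num at hx
  have hxn : 1 / 2 ≤ ‖x‖ := hx.trans (Complex.re_le_norm x)
  set y : ℂ := x / ((n : ℂ) + 1) with hy
  have hyre : 0 ≤ y.re := by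
    rw [hy, hnc, Complex.div_ofReal_re]; exact div_nonneg (by linarith) hn.le
  have hyn : ‖y‖ = ‖x‖ / ((n : ℝ) + 1) := by
    rw [hy, norm_div, hnc, Complex.norm_real, Real.norm_of_nonneg hn.le]
  have hre : ∀ c : ℝ, 0 < c → 0 ≤ ((c : ℂ) * y).re := by
    intro c hc; rw [Complex.re_ofReal_mul]; positivity
  have hne : ∀ c : ℝ, 0 < c → (1 + (c : ℂ) * y) ≠ 0 := by
    intro c hc h
    have := congrArg Complex.re h
    have h2 := hre c hc
    rw [Complex.add_re] at this
    simp only [Complex.one_re, Complex.zero_re] at this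
    linarith
  have b1 : ‖x ^ (-s)‖ ≤ 2 ^ s.re * Real.exp (Real.pi * |s.im|) := by
    rw [Complex.norm_cpow_of_ne_zero hx0, div_eq_mul_inv, ← Real.exp_neg]
    gcongr
    · rw [Complex.neg_re, Real.rpow_neg (norm_nonneg _), ← Real.inv_rpow (norm_nonneg _)]
      gcongr
      rw [inv_le_comm₀ (by positivity) (by norm_num)]
      linarith
    · simp only [Complex.neg_im, mul_neg, neg_neg]
      calc x.arg * s.im ≤ |x.arg * s.im| := le_abs_self _
        _ = |x.arg| * |s.im| := abs_mul _ _
        _ ≤ _ := by gcongr; exact Complex.abs_arg_le_pi x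
  have b2 : ‖((n : ℂ) + 1) ^ (-(3 * s))‖ = ((n : ℝ) + 1) ^ (-(3 * s.re)) := by
    rw [hnc, Complex.norm_cpow_eq_rpow_re_of_pos hn]; simp
  have b3 : ‖(1 + (a : ℂ) * y) ^ (-s) * (1 + (b : ℂ) * y) ^ (-s) - 1‖ ≤
      Real.exp (2 * Real.pi * |s.im|) * (‖s‖ * ((a + b) * ‖y‖)) := by
    rw [Complex.cpow_def_of_ne_zero (hne a ha), Complex.cpow_def_of_ne_zero (hne b hb), ← Complex.exp_add]
    refine (wexp_bound (B := 2 * Real.pi * |s.im|) (by positivity) ?_).trans ?_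
    · have hh : ∀ c : ℝ, 0 < c → (Complex.log (1 + c * y) * -s).re ≤ Real.pi * |s.im| := by
        intro c hc
        have l1 : 0 ≤ (Complex.log (1 + c * y)).re := by
          rw [Complex.log_re]
          apply Real.log_nonneg
          refine le_trans ?_ (Complex.re_le_norm _)
          rw [Complex.add_re, Complex.one_re]
          linarith [hre c hc]
        have l2 : (Complex.log (1 + c * y)).im * s.im ≤ Real.pi * |s.im| := by
          refine (le_abs_self _).trans ?_
          rw [abs_mul, Complex.log_im]
          gcongr; exact Complex.abs_arg_le_pi _
        simp only [Complex.mul_re, Complex.neg_re, Complex.neg_im]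
        nlinarith [mul_nonneg l1 hs.le]
      rw [Complex.add_re]
      linarith [hh a ha, hh b hb]
    · gcongr
      rw [← add_mul, norm_mul, norm_neg, mul_comm]
      gcongr
      refine (norm_add_le _ _).trans ?_
      have h1 := wlog_bound (hre a ha)
      have h2 := wlog_bound (hre b hb)
      rw [norm_mul, Complex.norm_real, Real.norm_of_nonneg ha.le] at h1
      rw [norm_mul, Complex.norm_real, Real.norm_of_nonneg hb.le] at h2
      linarith
  rw [wterm, norm_mul, norm_mul, b2]
  calc _ ≤ (2 ^ s.re * Real.exp (Real.pi * |s.im|)) * ((n : ℝ) + 1) ^ (-(3 * s.re)) *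
      (Real.exp (2 * Real.pi * |s.im|) * (‖s‖ * ((a + b) * ‖y‖))) := by gcongr
    _ = _ := by
      rw [hyn, wC, show -(1 + 3 * s.re) = -(3 * s.re) - 1 by ring, Real.rpow_sub_one hn.ne',
        show 3 * Real.pi * |s.im| = Real.pi * |s.im| + 2 * Real.pi * |s.im| by ring, Real.exp_add]
      ring

lemma wterm_diff_x {a b : ℝ} (ha : 0 < a) (hb : 0 < b) (s : ℂ) (n : ℕ) :
    DifferentiableOn ℂ (wterm a b s n) {z | 0 < z.re} := by
  intro x hx
  have hx' : 0 < x.re := hx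
  apply DifferentiableAt.differentiableWithinAt
  have hnc : ((n : ℂ) + 1) = (((n : ℝ) + 1 : ℝ) : ℂ) := by push_cast; ring
  have hsl : ∀ c : ℝ, 0 < c → (1 + (c : ℂ) * (x / ((n : ℂ) + 1))) ∈ Complex.slitPlane := by
    intro c hc
    left
    rw [Complex.add_re, Complex.re_ofReal_mul, hnc, Complex.div_ofReal_re, Complex.one_re]
    positivity
  unfold wterm
  have h0 : x ∈ Complex.slitPlane := Or.inl hx'
  refine DifferentiableAt.mul (DifferentiableAt.mul ?_ (by fun_prop)) (DifferentiableAt.sub (DifferentiableAt.mul ?_ ?_) (by fun_prop))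
  · exact DifferentiableAt.cpow_const (by fun_prop) h0
  · exact DifferentiableAt.cpow_const (by fun_prop) (hsl a ha)
  · exact DifferentiableAt.cpow_const (by fun_prop) (hsl b hb)

lemma wterm_diff_s {a b : ℝ} (ha : 0 < a) (hb : 0 < b) (n k : ℕ) :
    Differentiable ℂ (fun s => wterm a b s n ((k : ℂ) + 1)) := by
  intro s
  have hk : ((k : ℂ) + 1) ≠ 0 := by exact_mod_cast Nat.succ_ne_zero k
  have hn : ((n : ℂ) + 1) ≠ 0 := by exact_mod_cast Nat.succ_ne_zero n
  have hc : ∀ c : ℝ, 0 < c → (1 + (c : ℂ) * (((k : ℂ) + 1) / ((n : ℂ) + 1))) ≠ 0 := by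
    intro c hc
    have : (0 : ℝ) < 1 + c * (((k : ℝ) + 1) / ((n : ℝ) + 1)) := by positivity
    have h2 := Complex.ofReal_ne_zero.2 this.ne'
    push_cast at h2
    exact h2
  unfold wterm
  refine DifferentiableAt.mul (DifferentiableAt.mul ?_ ?_) (DifferentiableAt.sub (DifferentiableAt.mul ?_ ?_) (by fun_prop))
  · exact DifferentiableAt.const_cpow (by fun_prop) (Or.inl hk)
  · exact DifferentiableAt.const_cpow (by fun_prop) (Or.inl hn)
  · exact DifferentiableAt.const_cpow (by fun_prop) (Or.inl (hc a ha))
  · exact DifferentiableAt.const_cpow (by fun_prop) (Or.inl (hc b hb))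

noncomputable def wh (a b : ℝ) (s : ℂ) (k : ℕ) : ℂ := ∑' n, wterm a b s n ((k : ℂ) + 1)

noncomputable def wzs (σ : ℝ) : ℝ := ∑' n : ℕ, ((n : ℝ) + 1) ^ (-(1 + 3 * σ))

lemma wzs_summable {σ : ℝ} (hσ : 0 < σ) : Summable fun n : ℕ => ((n : ℝ) + 1) ^ (-(1 + 3 * σ)) := by
  have h : Summable fun n : ℕ => (n : ℝ) ^ (-(1 + 3 * σ)) := Real.summable_nat_rpow.2 (by linarith)
  simpa using (summable_nat_add_iff 1).2 h

lemma wzs_anti {σ ε : ℝ} (hε : 0 < ε) (h : ε ≤ σ) : wzs σ ≤ wzs ε := by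
  refine (wzs_summable (hε.trans_le h)).tsum_le_tsum (fun n => ?_) (wzs_summable hε)
  apply Real.rpow_le_rpow_of_exponent_le
  · have : (0 : ℝ) ≤ n := by positivity
    linarith
  · linarith

lemma wzs_nonneg (σ : ℝ) : 0 ≤ wzs σ := tsum_nonneg fun n => by positivity

lemma wC_nonneg {a b : ℝ} (ha : 0 < a) (hb : 0 < b) (s : ℂ) : 0 ≤ wC a b s := by
  unfold wC; positivity

lemma wterm_bound_nat {a b : ℝ} (ha : 0 < a) (hb : 0 < b) {s : ℂ} (hs : 0 < s.re) (n k : ℕ) :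
    ‖wterm a b s n ((k : ℂ) + 1)‖ ≤ wC a b s * ((n : ℝ) + 1) ^ (-(1 + 3 * s.re)) * ((k : ℝ) + 1) := by
  have h := wterm_bound ha hb hs n (x := (k : ℂ) + 1) (by
    have : (0 : ℝ) ≤ k := by positivity
    simp; linarith)
  have e : ‖(k : ℂ) + 1‖ = (k : ℝ) + 1 := by
    exact_mod_cast Complex.norm_natCast (k + 1)
  rwa [e] at h

lemma wterm_summable {a b : ℝ} (ha : 0 < a) (hb : 0 < b) {s : ℂ} (hs : 0 < s.re) (k : ℕ) :
    Summable fun n => wterm a b s n ((k : ℂ) + 1) :=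
  Summable.of_norm_bounded (((wzs_summable hs).mul_left _).mul_right _)
    (fun n => wterm_bound_nat ha hb hs n k)

lemma wd3_bound {a b : ℝ} (ha : 0 < a) (hb : 0 < b) {s : ℂ} (hs : 0 < s.re) (k : ℕ) :
    ‖wd3 (wh a b s) k‖ ≤ 240 * (wC a b s * wzs s.re) / ((k : ℝ) + 1) ^ 2 := by
  have S := fun j => wterm_summable ha hb hs j
  have e : wd3 (wh a b s) k = ∑' n, (wterm a b s n (((k + 3 : ℕ) : ℂ) + 1)
      - 3 * wterm a b s n (((k + 2 : ℕ) : ℂ) + 1) + 3 * wterm a b s n (((k + 1 : ℕ) : ℂ) + 1)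
      - wterm a b s n ((k : ℂ) + 1)) := by
    rw [((((S _).sub ((S _).mul_left 3)).add ((S _).mul_left 3))).tsum_sub (S k),
      (((S _).sub ((S _).mul_left 3))).tsum_add ((S _).mul_left 3),
      (S _).tsum_sub ((S _).mul_left 3), tsum_mul_left, tsum_mul_left]
    rfl
  rw [e]
  have hsum : HasSum (fun n : ℕ => 240 * (wC a b s * ((n : ℝ) + 1) ^ (-(1 + 3 * s.re))) / ((k : ℝ) + 1) ^ 2)
      (240 * (wC a b s * wzs s.re) / ((k : ℝ) + 1) ^ 2) :=
    (((wzs_summable hs).hasSum.mul_left (wC a b s)).mul_left 240).div_const _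
  refine tsum_of_norm_bounded hsum (fun n => ?_)
  have h := wD3 (wterm_diff_x ha hb s n) (B := wC a b s * ((n : ℝ) + 1) ^ (-(1 + 3 * s.re)))
    (mul_nonneg (wC_nonneg ha hb s) (by positivity)) (fun z hz => wterm_bound ha hb hs n hz)
    ((k : ℝ) + 1) (by have : (0 : ℝ) ≤ k := by positivity
                      linarith)
  refine le_trans (le_of_eq ?_) h
  congr 1
  push_cast
  ring_nf

noncomputable def wT (a b : ℝ) (s : ℂ) : ℂ :=
  (1 - 2 ^ (1 - s)) * riemannZeta s * riemannZeta (3 * s) +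
  (wh a b s 0 / 2 - (wh a b s 1 - wh a b s 0) / 4 + (wh a b s 2 - 2 * wh a b s 1 + wh a b s 0) / 8
    - walt (wd3 (wh a b s)) / 8)

def wΩ (ε : ℝ) : Set ℂ := {s | ε < s.re} ∩ {s | 3 * s.re - s.im < 1 / 2} ∩ Metric.ball 0 100

lemma wΩ_open (ε : ℝ) : IsOpen (wΩ ε) :=
  ((isOpen_lt continuous_const Complex.continuous_re).inter
    (isOpen_lt (by fun_prop) continuous_const)).inter Metric.isOpen_ball

lemma wΩ_convex (ε : ℝ) : Convex ℝ (wΩ ε) := by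
  refine ((convex_halfSpace_re_gt ε).inter ?_).inter (convex_ball _ _)
  refine convex_halfSpace_lt (f := fun s : ℂ => 3 * s.re - s.im) ⟨?_, ?_⟩ _
  · intro x y; simp; ring
  · intro c x; simp; ring

lemma wC_le {a b : ℝ} (ha : 0 < a) (hb : 0 < b) {s : ℂ} (hs : ‖s‖ ≤ 100) :
    wC a b s ≤ Real.exp (3 * Real.pi * 100) * 2 ^ (100 : ℝ) * 100 * (a + b) := by
  unfold wC
  have h1 := (Complex.abs_im_le_norm s).trans hs
  have h2 := (Complex.re_le_norm s).trans hs
  gcongr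
  norm_num

lemma wh_diff {a b : ℝ} (ha : 0 < a) (hb : 0 < b) {ε : ℝ} (hε : 0 < ε) (k : ℕ) :
    DifferentiableOn ℂ (fun s => wh a b s k) (wΩ ε) := by
  refine Complex.differentiableOn_tsum_of_summable_norm
    (u := fun n : ℕ => (Real.exp (3 * Real.pi * 100) * 2 ^ (100 : ℝ) * 100 * (a + b)) *
      ((n : ℝ) + 1) ^ (-(1 + 3 * ε)) * ((k : ℝ) + 1)) (((wzs_summable hε).mul_left _).mul_right _)
    (fun n => (wterm_diff_s ha hb n k).differentiableOn) (wΩ_open ε) ?_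
  intro n s hs
  have h1 : ε < s.re := hs.1.1
  refine (wterm_bound_nat ha hb (hε.trans h1) n k).trans ?_
  have h2 := wC_le ha hb (s := s) (by simpa using (Metric.mem_ball.1 hs.2).le)
  gcongr
  have : (0 : ℝ) ≤ n := by positivity
  linarith

lemma wsq_summable (M : ℝ) : Summable fun k : ℕ => 240 * M / ((k : ℝ) + 1) ^ 2 := by
  have h : Summable fun n : ℕ => 1 / (n : ℝ) ^ 2 := Real.summable_one_div_nat_pow.2 (by norm_num)
  have h2 := ((summable_nat_add_iff 1).2 h).mul_left (240 * M)
  refine h2.congr (fun k => ?_)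
  push_cast
  ring

lemma walt_diff {a b : ℝ} (ha : 0 < a) (hb : 0 < b) {ε : ℝ} (hε : 0 < ε) :
    DifferentiableOn ℂ (fun s => walt (wd3 (wh a b s))) (wΩ ε) := by
  refine Complex.differentiableOn_tsum_of_summable_norm
    (u := fun k : ℕ => 240 * ((Real.exp (3 * Real.pi * 100) * 2 ^ (100 : ℝ) * 100 * (a + b)) *
      wzs ε) / ((k : ℝ) + 1) ^ 2) (wsq_summable _) ?_ (wΩ_open ε) ?_
  · intro k
    have := fun j => wh_diff ha hb hε j
    unfold wd3
    fun_prop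
  · intro k s hs
    have h1 : ε < s.re := hs.1.1
    simp only [norm_mul, norm_pow, norm_neg, norm_one, one_pow, one_mul]
    refine (wd3_bound ha hb (hε.trans h1) k).trans ?_
    have h2 := wC_le ha hb (s := s) (by simpa using (Metric.mem_ball.1 hs.2).le)
    have h3 := wzs_anti hε h1.le
    have h4 := wzs_nonneg s.re
    gcongr

lemma wΩ_ne {ε : ℝ} {s : ℂ} (hs : s ∈ wΩ ε) (c : ℝ) (hc : 1 / 6 ≤ c) : s ≠ c := by
  rintro rfl
  have := hs.1.2
  simp at this
  linarith

lemma wT_diff {a b : ℝ} (ha : 0 < a) (hb : 0 < b) {ε : ℝ} (hε : 0 < ε) :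
    DifferentiableOn ℂ (wT a b) (wΩ ε) := by
  have h1 := wh_diff ha hb hε 0
  have h2 := wh_diff ha hb hε 1
  have h3 := wh_diff ha hb hε 2
  have h4 := walt_diff ha hb hε
  unfold wT
  refine DifferentiableOn.add ?_ (by fun_prop)
  intro s hs
  apply DifferentiableAt.differentiableWithinAt
  refine DifferentiableAt.mul (DifferentiableAt.mul ?_ ?_) ?_
  · refine DifferentiableAt.sub (by fun_prop) (DifferentiableAt.const_cpow (by fun_prop) (Or.inl (by norm_num)))
  · exact differentiableAt_riemannZeta (by simpa using wΩ_ne hs 1 (by norm_num))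
  · refine DifferentiableAt.comp s (differentiableAt_riemannZeta ?_) (by fun_prop)
    intro h
    refine wΩ_ne hs (1 / 3) (by norm_num) ?_
    push_cast
    linear_combination h / 3

lemma wreal_bound {p q t : ℝ} (hp : 0 ≤ p) (hq : 0 ≤ q) (ht : 0 < t) (ht1 : t ≤ 1) :
    |(1 + p) ^ (-t) * (1 + q) ^ (-t) - 1 + t * (p + q)| ≤ t * (2 * (p + q) ^ 2) := by
  rw [Real.rpow_def_of_pos (by linarith), Real.rpow_def_of_pos (by linarith), ← Real.exp_add]
  set P := Real.log (1 + p)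
  set Q := Real.log (1 + q)
  have hl : ∀ x : ℝ, 0 ≤ x → 0 ≤ Real.log (1 + x) ∧ Real.log (1 + x) ≤ x ∧ x - x ^ 2 ≤ Real.log (1 + x) := by
    intro x hx
    refine ⟨Real.log_nonneg (by linarith), ?_, ?_⟩
    · have := Real.log_le_sub_one_of_pos (x := 1 + x) (by linarith); linarith
    · refine le_trans ?_ (Real.one_sub_inv_le_log_of_pos (x := 1 + x) (by linarith))
      have : 1 - (1 + x)⁻¹ = x / (1 + x) := by field_simp; ring
      rw [this, le_div_iff₀ (by linarith)]
      nlinarith [pow_nonneg hx 3]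
  obtain ⟨p1, p2, p3⟩ := hl p hp
  obtain ⟨q1, q2, q3⟩ := hl q hq
  have hexp : ∀ u : ℝ, 0 ≤ u → 1 - u ≤ Real.exp (-u) ∧ Real.exp (-u) ≤ 1 - u + u ^ 2 / 2 := by
    intro u hu
    constructor
    · have := Real.add_one_le_exp (-u); linarith
    · have h1 := Real.quadratic_le_exp_of_nonneg hu
      rw [Real.exp_neg, inv_le_iff_one_le_mul₀ (Real.exp_pos u)]
      have h2 : 0 ≤ 1 - u + u ^ 2 / 2 := by nlinarith [sq_nonneg (u - 1)]
      calc 1 ≤ (1 - u + u ^ 2 / 2) * (1 + u + u ^ 2 / 2) := by nlinarith [sq_nonneg (u ^ 2)]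
        _ ≤ _ := by gcongr
  have hw : 0 ≤ P + Q := by linarith
  have e : P * -t + Q * -t = -(t * (P + Q)) := by ring
  obtain ⟨e1, e2⟩ := hexp (t * (P + Q)) (by positivity)
  rw [e, abs_le]
  have hPQ : (P + Q) ^ 2 ≤ (p + q) ^ 2 := by gcongr
  have ht2 : t ^ 2 ≤ t := by nlinarith
  have A : (t * (P + Q)) ^ 2 ≤ t * (p + q) ^ 2 := by
    rw [mul_pow]; gcongr
  have Bd : t * (p + q - (P + Q)) ≤ t * (p + q) ^ 2 := by
    gcongr; nlinarith [mul_nonneg hp hq]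
  have Bd0 : 0 ≤ t * (p + q - (P + Q)) := mul_nonneg ht.le (by linarith)
  have pos : 0 ≤ t * (p + q) ^ 2 := by positivity
  constructor <;> nlinarith

lemma wzs_zeta {t : ℝ} (ht : 0 < t) : ((wzs t : ℝ) : ℂ) = riemannZeta (1 + 3 * t) := by
  rw [zeta_eq_tsum_one_div_nat_add_one_cpow (by simpa using ht), wzs, Complex.ofReal_tsum]
  congr 1; funext n
  have : (0 : ℝ) ≤ (n : ℝ) + 1 := by positivity
  rw [Complex.ofReal_cpow this]
  push_cast
  rw [one_div, Complex.cpow_neg]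

lemma wzs_lim : Tendsto (fun t : ℝ => t * wzs t) (𝓝[>] 0) (𝓝 (1 / 3)) := by
  have h := riemannZeta_residue_one
  have h2 : Tendsto (fun t : ℝ => (1 : ℂ) + 3 * t) (𝓝[>] 0) (𝓝[≠] 1) := by
    rw [tendsto_nhdsWithin_iff]
    constructor
    · refine Tendsto.mono_left ?_ nhdsWithin_le_nhds
      have : Continuous (fun t : ℝ => (1 : ℂ) + 3 * t) := by fun_prop
      simpa using this.tendsto 0
    · filter_upwards [self_mem_nhdsWithin] with t ht
      have : (t : ℝ) ≠ 0 := ne_of_gt ht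
      simpa using this
  have h3 := (h.comp h2).div_const 3
  have h4 : Tendsto (fun t : ℝ => ((t * wzs t : ℝ) : ℂ)) (𝓝[>] 0) (𝓝 (1 / 3)) := by
    refine h3.congr' ?_
    filter_upwards [self_mem_nhdsWithin] with t ht
    simp only [Function.comp]
    push_cast
    rw [wzs_zeta ht]
    ring
  have h5 := (Complex.continuous_re.tendsto _).comp h4
  simp only [Function.comp_def, Complex.ofReal_re] at h5
  simpa using h5

lemma wterm_real {a b : ℝ} (ha : 0 < a) (hb : 0 < b) (t : ℝ) (n k : ℕ) :
    wterm a b t n ((k : ℂ) + 1) = ((((k : ℝ) + 1) ^ (-t) * ((n : ℝ) + 1) ^ (-(3 * t)) *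
      ((1 + a * (((k : ℝ) + 1) / ((n : ℝ) + 1))) ^ (-t) *
        (1 + b * (((k : ℝ) + 1) / ((n : ℝ) + 1))) ^ (-t) - 1) : ℝ) : ℂ) := by
  unfold wterm
  push_cast
  rw [Complex.ofReal_cpow (by positivity), Complex.ofReal_cpow (by positivity),
    Complex.ofReal_cpow (by positivity), Complex.ofReal_cpow (by positivity)]
  push_cast
  rfl

lemma wh_err {a b : ℝ} (ha : 0 < a) (hb : 0 < b) {t : ℝ} (ht : 0 < t) (ht1 : t ≤ 1) (k : ℕ) :
    ‖wh a b t k + (((k : ℝ) + 1) ^ (-t) * ((a + b) * ((k : ℝ) + 1)) * (t * wzs t) : ℝ)‖ ≤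
      t * ∑' n : ℕ, (2 * ((a + b) * ((k : ℝ) + 1)) ^ 2) * (1 / ((n : ℝ) + 1) ^ 2) := by
  have hs2 : Summable fun n : ℕ => (2 * ((a + b) * ((k : ℝ) + 1)) ^ 2) * (1 / ((n : ℝ) + 1) ^ 2) := by
    apply Summable.mul_left
    have h : Summable fun n : ℕ => 1 / (n : ℝ) ^ 2 := Real.summable_one_div_nat_pow.2 (by norm_num)
    simpa using (summable_nat_add_iff 1).2 h
  have hz := (wzs_summable ht).mul_left (((k : ℝ) + 1) ^ (-t) * ((a + b) * ((k : ℝ) + 1)) * t)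
  have hzc : Summable (fun n : ℕ => ((((k : ℝ) + 1) ^ (-t) * ((a + b) * ((k : ℝ) + 1)) * t *
      ((n : ℝ) + 1) ^ (-(1 + 3 * t)) : ℝ) : ℂ)) := Complex.ofRealCLM.summable hz
  have e : wh a b t k + (((k : ℝ) + 1) ^ (-t) * ((a + b) * ((k : ℝ) + 1)) * (t * wzs t) : ℝ) =
      ∑' n : ℕ, (wterm a b t n ((k : ℂ) + 1) + ((((k : ℝ) + 1) ^ (-t) * ((a + b) * ((k : ℝ) + 1)) * t *
      ((n : ℝ) + 1) ^ (-(1 + 3 * t)) : ℝ) : ℂ)) := by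
    rw [(wterm_summable ha hb (by simpa using ht) k).tsum_add hzc, ← Complex.ofReal_tsum, tsum_mul_left]
    rw [wh, wzs, mul_assoc _ t]
  rw [e]
  refine tsum_of_norm_bounded (hs2.hasSum.mul_left t) (fun n => ?_)
  have hn : (0 : ℝ) < (n : ℝ) + 1 := by positivity
  have hk : (0 : ℝ) < (k : ℝ) + 1 := by positivity
  rw [wterm_real ha hb, ← Complex.ofReal_add, Complex.norm_real, Real.norm_eq_abs]
  have hb1 := wreal_bound (p := a * (((k : ℝ) + 1) / ((n : ℝ) + 1))) (q := b * (((k : ℝ) + 1) / ((n : ℝ) + 1)))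
    (by positivity) (by positivity) ht ht1
  have e2 : ((n : ℝ) + 1) ^ (-(1 + 3 * t)) = ((n : ℝ) + 1) ^ (-(3 * t)) / ((n : ℝ) + 1) := by
    rw [show -(1 + 3 * t) = -(3 * t) - 1 by ring, Real.rpow_sub_one hn.ne']
  have e3 : ((k : ℝ) + 1) ^ (-t) * ((n : ℝ) + 1) ^ (-(3 * t)) *
      ((1 + a * (((k : ℝ) + 1) / ((n : ℝ) + 1))) ^ (-t) *
        (1 + b * (((k : ℝ) + 1) / ((n : ℝ) + 1))) ^ (-t) - 1) +
      ((k : ℝ) + 1) ^ (-t) * ((a + b) * ((k : ℝ) + 1)) * t * ((n : ℝ) + 1) ^ (-(1 + 3 * t)) =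
      (((k : ℝ) + 1) ^ (-t) * ((n : ℝ) + 1) ^ (-(3 * t))) *
      ((1 + a * (((k : ℝ) + 1) / ((n : ℝ) + 1))) ^ (-t) *
        (1 + b * (((k : ℝ) + 1) / ((n : ℝ) + 1))) ^ (-t) - 1 +
        t * (a * (((k : ℝ) + 1) / ((n : ℝ) + 1)) + b * (((k : ℝ) + 1) / ((n : ℝ) + 1)))) := by
    rw [e2]; ring
  rw [e3, abs_mul]
  have f1 : ((k : ℝ) + 1) ^ (-t) ≤ 1 := Real.rpow_le_one_of_one_le_of_nonpos (by linarith [(Nat.cast_nonneg k : (0:ℝ) ≤ k)]) (by linarith)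
  have f2 : ((n : ℝ) + 1) ^ (-(3 * t)) ≤ 1 := Real.rpow_le_one_of_one_le_of_nonpos (by linarith [(Nat.cast_nonneg n : (0:ℝ) ≤ n)]) (by linarith)
  have f3 : |((k : ℝ) + 1) ^ (-t) * ((n : ℝ) + 1) ^ (-(3 * t))| ≤ 1 := by
    rw [abs_of_nonneg (by positivity)]
    exact mul_le_one₀ f1 (by positivity) f2
  calc _ ≤ 1 * _ := mul_le_mul f3 hb1 (abs_nonneg _) zero_le_one
    _ = _ := by field_simp

lemma wh_lim {a b : ℝ} (ha : 0 < a) (hb : 0 < b) (k : ℕ) :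
    Tendsto (fun t : ℝ => wh a b t k) (𝓝[>] 0) (𝓝 (-((a + b) * ((k : ℂ) + 1) / 3))) := by
  have hk : (0 : ℝ) < (k : ℝ) + 1 := by positivity
  have h0 : Tendsto (fun t : ℝ => t) (𝓝[>] 0) (𝓝 0) := tendsto_id.mono_left nhdsWithin_le_nhds
  have h1 : Tendsto (fun t : ℝ => wh a b t k + (((k : ℝ) + 1) ^ (-t) * ((a + b) * ((k : ℝ) + 1)) * (t * wzs t) : ℝ))
      (𝓝[>] 0) (𝓝 0) := by
    refine squeeze_zero_norm' (a := fun t => t * ∑' n : ℕ, (2 * ((a + b) * ((k : ℝ) + 1)) ^ 2) * (1 / ((n : ℝ) + 1) ^ 2)) ?_ ?_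
    · filter_upwards [Ioo_mem_nhdsGT (zero_lt_one (α := ℝ))] with t ht
      exact wh_err ha hb ht.1 ht.2.le k
    · have h5 := h0.mul_const (∑' n : ℕ, (2 * ((a + b) * ((k : ℝ) + 1)) ^ 2) * (1 / ((n : ℝ) + 1) ^ 2))
      rw [zero_mul] at h5
      exact h5
  have h2 : Tendsto (fun t : ℝ => ((k : ℝ) + 1) ^ (-t) * ((a + b) * ((k : ℝ) + 1)) * (t * wzs t)) (𝓝[>] 0)
      (𝓝 (1 * ((a + b) * ((k : ℝ) + 1)) * (1 / 3))) := by
    refine Tendsto.mul (Tendsto.mul_const _ ?_) wzs_lim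
    have : Continuous fun t : ℝ => ((k : ℝ) + 1) ^ (-t) :=
      Continuous.rpow continuous_const continuous_neg (fun _ => Or.inl hk.ne')
    have h3 := this.tendsto 0
    simp only [neg_zero, Real.rpow_zero] at h3
    exact h3.mono_left nhdsWithin_le_nhds
  have h3 := h1.sub ((Complex.continuous_ofReal.tendsto _).comp h2)
  refine (h3.congr (fun t => ?_)).trans (le_of_eq ?_)
  · simp [Function.comp]
  · congr 1; push_cast; ring

lemma walt_lim {a b : ℝ} (ha : 0 < a) (hb : 0 < b) :
    Tendsto (fun t : ℝ => walt (wd3 (wh a b t))) (𝓝[>] 0) (𝓝 0) := by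
  have hM : Tendsto (fun t : ℝ => 2 ^ t * (a + b) * (t * wzs t)) (𝓝[>] 0) (𝓝 (2 ^ (0 : ℝ) * (a + b) * (1 / 3))) := by
    refine Tendsto.mul (Tendsto.mul_const _ ?_) wzs_lim
    have : Continuous fun t : ℝ => (2 : ℝ) ^ t :=
      Continuous.rpow continuous_const continuous_id (fun _ => Or.inl (by norm_num))
    exact (this.tendsto 0).mono_left nhdsWithin_le_nhds
  have hM' : ∀ᶠ t : ℝ in 𝓝[>] 0, 2 ^ t * (a + b) * (t * wzs t) ≤ (2 ^ (0 : ℝ) * (a + b) * (1 / 3)) + 1 :=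
    hM.eventually (eventually_le_nhds (by linarith))
  have hz : (0 : ℂ) = ∑' k : ℕ, (0 : ℂ) := by simp
  rw [hz]
  refine tendsto_tsum_of_dominated_convergence
    (bound := fun k : ℕ => 240 * ((2 ^ (0 : ℝ) * (a + b) * (1 / 3)) + 1) / ((k : ℝ) + 1) ^ 2)
    (wsq_summable _) ?_ ?_
  · intro k
    have h : Tendsto (fun t : ℝ => (-1 : ℂ) ^ k * (wh a b t (k + 3) - 3 * wh a b t (k + 2) + 3 * wh a b t (k + 1) - wh a b t k)) (𝓝[>] 0) _ :=
      (((((wh_lim ha hb (k + 3)).sub ((wh_lim ha hb (k + 2)).const_mul 3)).add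
      ((wh_lim ha hb (k + 1)).const_mul 3)).sub (wh_lim ha hb k))).const_mul ((-1) ^ k)
    refine h.trans (le_of_eq ?_)
    congr 1; push_cast; ring
  · filter_upwards [hM', self_mem_nhdsWithin] with t h1 h2 k
    have ht : 0 < t := h2
    simp only [norm_mul, norm_pow, norm_neg, norm_one, one_pow, one_mul]
    refine (wd3_bound ha hb (s := (t : ℂ)) (by simpa using ht) k).trans ?_
    gcongr
    refine le_trans (le_of_eq ?_) h1
    simp [wC, abs_of_pos ht]
    ring

lemma wT_lim {a b : ℝ} (ha : 0 < a) (hb : 0 < b) :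
    Tendsto (fun t : ℝ => wT a b t) (𝓝[>] 0) (𝓝 (-(1 / 4 + ((a : ℂ) + b) / 12))) := by
  have hc : ContinuousAt (fun t : ℝ => (1 - (2 : ℂ) ^ (1 - (t : ℂ))) * riemannZeta t * riemannZeta (3 * t)) 0 := by
    have c1 : ContinuousAt (fun t : ℝ => (t : ℂ)) 0 := by fun_prop
    have c2 : ContinuousAt (fun t : ℝ => (3 * t : ℂ)) 0 := by fun_prop
    refine ContinuousAt.mul (ContinuousAt.mul ?_ ?_) ?_
    · exact ContinuousAt.sub (by fun_prop) (ContinuousAt.const_cpow (by fun_prop) (Or.inl (by norm_num)))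
    · exact ContinuousAt.comp (f := fun t : ℝ => (t : ℂ)) (g := riemannZeta)
        (differentiableAt_riemannZeta (by simp)).continuousAt c1
    · exact ContinuousAt.comp (f := fun t : ℝ => (3 * t : ℂ)) (g := riemannZeta)
        (differentiableAt_riemannZeta (by simp)).continuousAt c2
  have h1 := hc.tendsto.mono_left (nhdsWithin_le_nhds (s := Set.Ioi 0))
  have w0 := wh_lim ha hb 0
  have w1 := wh_lim ha hb 1
  have w2 := wh_lim ha hb 2
  have h2 := h1.add ((((w0.div_const 2).sub ((w1.sub w0).div_const 4)).add
    (((w2.sub (w1.const_mul 2)).add w0).div_const 8)).sub ((walt_lim ha hb).div_const 8))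
  refine h2.trans (le_of_eq ?_)
  congr 1
  simp [riemannZeta_zero]
  ring

noncomputable def wf (a b : ℝ) (s : ℂ) (k n : ℕ) : ℂ := ((wq a b k n : ℝ) : ℂ) ^ (-s)

lemma wf_eq {a b : ℝ} (ha : 0 < a) (hb : 0 < b) (s : ℂ) (k n : ℕ) :
    wf a b s k n = ((k : ℂ) + 1) ^ (-s) * ((n : ℂ) + 1) ^ (-(3 * s)) + wterm a b s n ((k : ℂ) + 1) := by
  have hk : (0 : ℝ) < (k : ℝ) + 1 := by positivity
  have hn : (0 : ℝ) < (n : ℝ) + 1 := by positivity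
  have hn' : (n : ℂ) + 1 ≠ 0 := by exact_mod_cast Nat.succ_ne_zero n
  have e1 : wq a b k n = ((k : ℝ) + 1) * (((n : ℝ) + 1) * (((n : ℝ) + 1) * (((n : ℝ) + 1) *
      ((1 + a * (((k : ℝ) + 1) / ((n : ℝ) + 1))) * (1 + b * (((k : ℝ) + 1) / ((n : ℝ) + 1))))))) := by
    unfold wq; field_simp
  have e2 : ((n : ℂ) + 1) ^ (-(3 * s)) = ((n : ℂ) + 1) ^ (-s) * (((n : ℂ) + 1) ^ (-s) * ((n : ℂ) + 1) ^ (-s)) := by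
    rw [← Complex.cpow_add _ _ hn', ← Complex.cpow_add _ _ hn']
    congr 1; ring
  rw [wf, e1, wterm, e2, Complex.ofReal_mul, Complex.mul_cpow_ofReal_nonneg (by positivity) (by positivity),
    Complex.ofReal_mul, Complex.mul_cpow_ofReal_nonneg (by positivity) (by positivity),
    Complex.ofReal_mul, Complex.mul_cpow_ofReal_nonneg (by positivity) (by positivity),
    Complex.ofReal_mul, Complex.mul_cpow_ofReal_nonneg (by positivity) (by positivity),
    Complex.ofReal_mul, Complex.mul_cpow_ofReal_nonneg (by positivity) (by positivity)]
  push_cast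
  ring

lemma wpow_summable {σ : ℝ} (hσ : 1 < σ) : Summable fun n : ℕ => ((n : ℝ) + 1) ^ (-σ) := by
  have h : Summable fun n : ℕ => (n : ℝ) ^ (-σ) := Real.summable_nat_rpow.2 (by linarith)
  simpa using (summable_nat_add_iff 1).2 h

lemma wcpow_norm (s : ℂ) (n : ℕ) : ‖((n : ℂ) + 1) ^ (-s)‖ = ((n : ℝ) + 1) ^ (-s.re) := by
  have hnc : ((n : ℂ) + 1) = (((n : ℝ) + 1 : ℝ) : ℂ) := by push_cast; ring
  rw [hnc, Complex.norm_cpow_eq_rpow_re_of_pos (by positivity)]; simp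

lemma wcpow_summable {s : ℂ} (hs : 1 < s.re) : Summable fun n : ℕ => ((n : ℂ) + 1) ^ (-s) := by
  apply Summable.of_norm
  simp only [wcpow_norm]
  exact wpow_summable hs

lemma wcpow_tsum {s : ℂ} (hs : 1 < s.re) : ∑' n : ℕ, ((n : ℂ) + 1) ^ (-s) = riemannZeta s := by
  rw [zeta_eq_tsum_one_div_nat_add_one_cpow hs]
  simp only [Complex.cpow_neg, one_div]

lemma wf_summable {a b : ℝ} (ha : 0 < a) (hb : 0 < b) {s : ℂ} (hs : 1 < s.re) :
    Summable fun p : ℕ × ℕ => wf a b s p.1 p.2 := by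
  have h := (wpow_summable hs).mul_of_nonneg (wpow_summable hs)
    (fun n => by positivity) (fun n => by positivity)
  refine Summable.of_norm_bounded h (fun p => ?_)
  have hk : (0 : ℝ) ≤ (p.1 : ℝ) := by positivity
  have hn : (0 : ℝ) ≤ (p.2 : ℝ) := by positivity
  have hq : ((p.1 : ℝ) + 1) * ((p.2 : ℝ) + 1) ≤ wq a b p.1 p.2 := by
    unfold wq
    have h1 : 1 ≤ (p.2 : ℝ) + 1 + a * ((p.1 : ℝ) + 1) := by
      have : 0 ≤ a * ((p.1 : ℝ) + 1) := by positivity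
      linarith
    have h2 : 1 ≤ (p.2 : ℝ) + 1 + b * ((p.1 : ℝ) + 1) := by
      have : 0 ≤ b * ((p.1 : ℝ) + 1) := by positivity
      linarith
    calc ((p.1 : ℝ) + 1) * ((p.2 : ℝ) + 1) = ((p.1 : ℝ) + 1) * ((p.2 : ℝ) + 1) * 1 * 1 := by ring
      _ ≤ _ := by gcongr
  have hpos : (0 : ℝ) < ((p.1 : ℝ) + 1) * ((p.2 : ℝ) + 1) := by positivity
  rw [wf, Complex.norm_cpow_eq_rpow_re_of_pos (hpos.trans_le hq), ← Real.mul_rpow (by positivity) (by positivity),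
    Complex.neg_re]
  exact Real.rpow_le_rpow_of_nonpos hpos hq (by linarith)

lemma walt_zeta {s : ℂ} (hs : 1 < s.re) :
    walt (fun k => ((k : ℂ) + 1) ^ (-s)) = (1 - 2 ^ (1 - s)) * riemannZeta s := by
  rw [walt_eq (wcpow_summable hs), wcpow_tsum hs]
  have : ∀ k : ℕ, (((2 * k + 1 : ℕ) : ℂ) + 1) ^ (-s) = 2 ^ (-s) * ((k : ℂ) + 1) ^ (-s) := by
    intro k
    rw [show (((2 * k + 1 : ℕ) : ℂ) + 1) = ((2 : ℝ) : ℂ) * (((k : ℝ) + 1 : ℝ) : ℂ) by push_cast; ring,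
      Complex.mul_cpow_ofReal_nonneg (by norm_num) (by positivity)]
    push_cast; rfl
  simp only [this]
  rw [tsum_mul_left, wcpow_tsum hs, sub_eq_add_neg 1 s, Complex.cpow_add _ _ (by norm_num), Complex.cpow_one]
  ring

lemma walt_lin {u v : ℕ → ℂ} (c : ℂ) (hu : Summable u) (hv : Summable v) :
    walt (fun k => u k * c + v k) = walt u * c + walt v := by
  rw [walt, walt, walt, ← tsum_mul_right,
    ← ((wsummable_alt hu).mul_right _).tsum_add (wsummable_alt hv)]
  congr 1; funext k; ring

lemma wh_summable {a b : ℝ} (ha : 0 < a) (hb : 0 < b) {s : ℂ} (hs : 1 < s.re) (hs3 : 1 < (3 * s).re) :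
    Summable (wh a b s) := by
  have hprod : Summable fun p : ℕ × ℕ => ((p.1 : ℂ) + 1) ^ (-s) * ((p.2 : ℂ) + 1) ^ (-(3 * s)) :=
    summable_mul_of_summable_norm (f := fun k : ℕ => ((k : ℂ) + 1) ^ (-s))
      (g := fun k : ℕ => ((k : ℂ) + 1) ^ (-(3 * s))) (wcpow_summable hs).norm (wcpow_summable hs3).norm
  have hterm : Summable fun p : ℕ × ℕ => wterm a b s p.2 ((p.1 : ℂ) + 1) := by
    refine ((wf_summable ha hb hs).sub hprod).congr (fun p => ?_)
    rw [wf_eq ha hb, add_sub_cancel_left]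
  exact hterm.prod

lemma wf_row {a b : ℝ} (ha : 0 < a) (hb : 0 < b) {s : ℂ} (hs : 1 < s.re) (hs3 : 1 < (3 * s).re) (k : ℕ) :
    ∑' n, wf a b s k n = ((k : ℂ) + 1) ^ (-s) * riemannZeta (3 * s) + wh a b s k := by
  simp only [wf_eq ha hb]
  rw [((wcpow_summable hs3).mul_left _).tsum_add (wterm_summable ha hb (by linarith) k), tsum_mul_left,
    wcpow_tsum hs3, wh]

lemma wA {a b : ℝ} (ha : 0 < a) (hb : 0 < b) {s : ℂ} (hs : 1 < s.re) :
    walt (fun k => ∑' n, wf a b s k n) = wT a b s := by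
  have hs3 : 1 < (3 * s).re := by
    have : (3 * s).re = 3 * s.re := by simp
    rw [this]; linarith
  have hh := wh_summable ha hb hs hs3
  simp only [wf_row ha hb hs hs3]
  rw [walt_lin (u := fun k : ℕ => ((k : ℂ) + 1) ^ (-s)) _ (wcpow_summable hs) hh, walt_zeta hs,
    walt_euler hh, wT]

lemma wmain {s : ℂ} (hs : 1 < s.re) :
    (1 - 2 ^ (2 - 4 * s)) * ∑' p : ℕ × ℕ, wf 1 2 s p.2 p.1 =
      wT 1 2 s + 2 * 16 ^ (-s) * wT (1 / 2) (1 / 4) s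
       := by
  have hF : Summable fun p : ℕ × ℕ => wf 1 2 s p.1 p.2 := wf_summable (by norm_num) (by norm_num) hs
  have hS1 : ∑' p : ℕ × ℕ, wf 1 2 s p.2 p.1 = ∑' k, ∑' n, wf 1 2 s k n := by
    rw [← hF.tsum_prod]
    exact (Equiv.prodComm ℕ ℕ).tsum_eq (fun p : ℕ × ℕ => wf 1 2 s p.1 p.2)
  have h16 : ∀ (x : ℝ), 0 ≤ x → ((16 * x : ℝ) : ℂ) ^ (-s) = 16 ^ (-s) * (x : ℂ) ^ (-s) := by
    intro x hx
    rw [Complex.ofReal_mul, Complex.mul_cpow_ofReal_nonneg (by norm_num) hx]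
    push_cast; rfl
  -- half-sublattice
  have hG : Summable fun p : ℕ × ℕ => wf (1 / 2) (1 / 4) s p.1 p.2 := wf_summable (by norm_num) (by norm_num) hs
  have g1 : ∀ i j : ℕ, wf 1 2 s (2 * j + 1) i = 16 ^ (-s) * wf (1 / 2) (1 / 4) s i j := by
    intro i j
    rw [wf, wf, ← h16 _ (by unfold wq; positivity)]
    congr 2
    unfold wq
    push_cast; ring
  have g2 : ∀ i j : ℕ, 16 ^ (-s) * wf (1 / 2) (1 / 4) s (2 * i + 1) j = 16 ^ (-s) * wf 1 2 s j i := by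
    intro i j
    rw [← g1, wf, wf, ← h16 _ (by unfold wq; positivity)]
    congr 2
    unfold wq
    push_cast; ring
  have A1 := wA (a := 1) (b := 2) (by norm_num) (by norm_num) hs
  have A2 := wA (a := 1 / 2) (b := 1 / 4) (by norm_num) (by norm_num) hs
  rw [walt_eq hF.prod] at A1
  rw [walt_eq hG.prod] at A2
  simp only [g1, tsum_mul_left] at A1
  have hcomm : ∑' k, ∑' n, wf (1 / 2) (1 / 4) s n k = ∑' k, ∑' n, wf (1 / 2) (1 / 4) s k n :=
    Summable.tsum_comm (f := wf (1 / 2) (1 / 4) s) hG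
  have hne : (16 : ℂ) ^ (-s) ≠ 0 := by simp [Complex.cpow_eq_zero_iff]
  have g3 : ∀ i j : ℕ, wf (1 / 2) (1 / 4) s (2 * i + 1) j = wf 1 2 s j i :=
    fun i j => mul_left_cancel₀ hne (g2 i j)
  simp only [g3] at A2
  have hcomm2 : ∑' k, ∑' n, wf 1 2 s n k = ∑' k, ∑' n, wf 1 2 s k n :=
    Summable.tsum_comm (f := wf 1 2 s) hF
  have h4 : (2 : ℂ) ^ (2 - 4 * s) = 4 * 16 ^ (-s) := by
    rw [sub_eq_add_neg, Complex.cpow_add _ _ (by norm_num), show -(4 * s) = ((4 : ℕ) : ℂ) * (-s) by push_cast; ring,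
      Complex.cpow_nat_mul' (by simp [Real.pi_pos]) (by simp [Real.pi_pos.le])]
    norm_num
  rw [hcomm] at A1
  rw [hcomm2] at A2
  rw [hS1, h4, ← A1, ← A2]
  ring

open Filter Topology

theorem stmt6 (Z : ℂ → ℂ)
    (hhol : DifferentiableOn ℂ Z
      {s : ℂ | -(1 / 4) < s.re ∧ s ≠ 1 / 2 ∧ s ≠ 1 / 3})
    (hser : ∀ s : ℂ, 1 / 2 < s.re →
      Z s = (6 : ℂ) ^ s * ∑' p : ℕ × ℕ,
        ((((p.1 + 1) * (p.2 + 1) * ((p.1 + 1) + (p.2 + 1)) *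
          ((p.1 + 1) + 2 * (p.2 + 1)) : ℕ) : ℂ)) ^ (-s)) :
    Z 0 = 3 / 8 := by
  set U : Set ℂ := {s : ℂ | -(1 / 4) < s.re ∧ s ≠ 1 / 2 ∧ s ≠ 1 / 3} with hU
  have hUo : IsOpen U := by
    have : U = {s : ℂ | -(1 / 4) < s.re} ∩ ({1 / 2}ᶜ ∩ {1 / 3}ᶜ) := by
      ext s; simp [hU]
    rw [this]
    exact (isOpen_lt continuous_const Complex.continuous_re).inter
      (isOpen_compl_singleton.inter isOpen_compl_singleton)
  let F : ℂ → ℂ := fun s => (1 - 2 ^ (2 - 4 * s)) * Z s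
  let G : ℂ → ℂ := fun s => 6 ^ s * (wT 1 2 s + 2 * 16 ^ (-s) * wT (1 / 2) (1 / 4) s)
  have hpow : ∀ c : ℂ, c ≠ 0 → Differentiable ℂ fun s : ℂ => c ^ s := fun c hc s =>
    DifferentiableAt.const_cpow (by fun_prop) (Or.inl hc)
  have hp6 := hpow 6 (by norm_num)
  have hp16 : Differentiable ℂ fun s : ℂ => (16 : ℂ) ^ (-s) := fun s =>
    DifferentiableAt.const_cpow (by fun_prop) (Or.inl (by norm_num))
  have hp2 : Differentiable ℂ fun s : ℂ => (2 : ℂ) ^ (2 - 4 * s) := fun s =>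
    DifferentiableAt.const_cpow (by fun_prop) (Or.inl (by norm_num))
  have hFG : ∀ s : ℂ, 1 < s.re → F s = G s := by
    intro s hs
    simp only [F, G]
    rw [hser s (by linarith), ← wmain hs]
    have : ∀ p : ℕ × ℕ, ((((p.1 + 1) * (p.2 + 1) * ((p.1 + 1) + (p.2 + 1)) *
          ((p.1 + 1) + 2 * (p.2 + 1)) : ℕ) : ℂ)) ^ (-s) = wf 1 2 s p.2 p.1 := by
      intro p
      rw [wf, wq]
      congr 1
      push_cast
      ring
    simp only [this]
    ring
  have hEq : ∀ ε : ℝ, 0 < ε → ε < 1 → Set.EqOn F G (wΩ ε) := by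
    intro ε hε hε1
    have hsub : wΩ ε ⊆ U := by
      intro s hs
      refine ⟨?_, ?_, ?_⟩
      · have := hs.1.1; simp at this; linarith
      · simpa using wΩ_ne hs (1 / 2) (by norm_num)
      · simpa using wΩ_ne hs (1 / 3) (by norm_num)
    have hFd : DifferentiableOn ℂ F (wΩ ε) := by
      have := hhol.mono hsub
      exact DifferentiableOn.mul (by fun_prop) this
    have hGd : DifferentiableOn ℂ G (wΩ ε) := by
      have t1 := wT_diff (a := 1) (b := 2) (by norm_num) (by norm_num) hε
      have t2 := wT_diff (a := 1 / 2) (b := 1 / 4) (by norm_num) (by norm_num) hε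
      exact DifferentiableOn.mul (by fun_prop) (t1.add (DifferentiableOn.mul (hp16.const_mul 2).differentiableOn t2))
    have hz0 : (⟨4, 20⟩ : ℂ) ∈ wΩ ε := by
      refine ⟨⟨?_, ?_⟩, ?_⟩
      · simp; linarith
      · norm_num
      · have := Complex.norm_le_abs_re_add_abs_im (⟨4, 20⟩ : ℂ)
        norm_num at this
        simp; linarith
    refine (hFd.analyticOnNhd (wΩ_open ε)).eqOn_of_preconnected_of_eventuallyEq
      (hGd.analyticOnNhd (wΩ_open ε)) (wΩ_convex ε).isPreconnected hz0 ?_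
    have : {s : ℂ | 1 < s.re} ∈ 𝓝 (⟨4, 20⟩ : ℂ) :=
      (isOpen_lt continuous_const Complex.continuous_re).mem_nhds (by norm_num)
    filter_upwards [this] with s hs
    exact hFG s hs
  have hlimG : Tendsto (fun t : ℝ => G t) (𝓝[>] 0) (𝓝 (-(9 / 8))) := by
    have l6 : Tendsto (fun t : ℝ => (6 : ℂ) ^ (t : ℂ)) (𝓝[>] 0) (𝓝 1) := by
      have := (hp6.continuous.comp Complex.continuous_ofReal).tendsto 0
      simp [Function.comp_def] at this
      exact this.mono_left nhdsWithin_le_nhds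
    have l16 : Tendsto (fun t : ℝ => (16 : ℂ) ^ (-(t : ℂ))) (𝓝[>] 0) (𝓝 1) := by
      have := (hp16.continuous.comp Complex.continuous_ofReal).tendsto 0
      simp only [Function.comp_def, Complex.ofReal_zero, neg_zero, Complex.cpow_zero] at this
      exact this.mono_left nhdsWithin_le_nhds
    have t1 := wT_lim (a := 1) (b := 2) (by norm_num) (by norm_num)
    have t2 := wT_lim (a := 1 / 2) (b := 1 / 4) (by norm_num) (by norm_num)
    refine (l6.mul (t1.add ((l16.const_mul 2).mul t2))).trans (le_of_eq ?_)
    congr 1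
    push_cast
    norm_num
  have hlimF : Tendsto (fun t : ℝ => F t) (𝓝[>] 0) (𝓝 (-3 * Z 0)) := by
    have hZ : ContinuousAt Z ((0 : ℝ) : ℂ) := by
      refine (hhol.differentiableAt (hUo.mem_nhds ?_)).continuousAt
      simp [hU]
    have hF : ContinuousAt F ((0 : ℝ) : ℂ) := by
      have := hp2.continuous.continuousAt (x := ((0 : ℝ) : ℂ))
      exact ContinuousAt.mul (by fun_prop) hZ
    have h := (hF.comp (f := fun t : ℝ => (t : ℂ)) Complex.continuous_ofReal.continuousAt).tendsto
    refine (h.mono_left nhdsWithin_le_nhds).trans (le_of_eq ?_)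
    congr 1
    simp only [F, Function.comp, Complex.ofReal_zero, mul_zero, sub_zero]
    norm_num
  have hev : (fun t : ℝ => F t) =ᶠ[𝓝[>] 0] fun t : ℝ => G t := by
    filter_upwards [Ioo_mem_nhdsGT (show (0 : ℝ) < 1 / 6 by norm_num)] with t ht
    refine hEq (t / 2) (by linarith [ht.1]) (by linarith [ht.2]) ⟨⟨?_, ?_⟩, ?_⟩
    · simp; linarith [ht.1]
    · simp; linarith [ht.2]
    · simp [abs_of_pos ht.1]; linarith [ht.2]
  have := tendsto_nhds_unique (hlimF.congr' hev) hlimG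
  linear_combination (-1 / 3 : ℂ) * this
end

section
/- The Witten zeta function ζ_{so(5)}(s) = 6^s ∑_{m,n≥1} (m n (m+n)(m+2n))^{-s} has a simple pole at s = 1/2 with residue √3 · Γ(1/4)² / (8√π). -/
open Filter Topology

namespace SO5

open MeasureTheory Set

lemma cpow_diff {a b : ℝ} (ha : 0 < a) (hab : a ≤ b) {s : ℂ} (hs : 0 < s.re) :
    ‖(b : ℂ) ^ (-s) - (a : ℂ) ^ (-s)‖ ≤ ‖s‖ / s.re * (a ^ (-s.re) - b ^ (-s.re)) := by
  have hs0 : s ≠ 0 := by rintro rfl; simp at hs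
  have h0 : (0 : ℝ) ∉ Set.uIcc a b := by
    rw [Set.uIcc_of_le hab]; intro h; exact absurd h.1 (not_le.mpr ha)
  have h1 := integral_cpow (a := a) (b := b) (r := -s - 1)
    (Or.inr ⟨by intro h; apply hs0; linear_combination -h, h0⟩)
  have h2 := integral_rpow (a := a) (b := b) (r := -s.re - 1)
    (Or.inr ⟨by intro h; apply hs.ne'; linear_combination -h, h0⟩)
  have e1 : -s - 1 + 1 = -s := by ring
  have e2 : -s.re - 1 + 1 = -s.re := by ring
  rw [e1] at h1
  rw [e2] at h2
  have h3 : (b : ℂ) ^ (-s) - (a : ℂ) ^ (-s) = -s * ∫ x in a..b, (x : ℂ) ^ (-s - 1) := by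
    rw [h1]; field_simp
  have h4 : a ^ (-s.re) - b ^ (-s.re) = s.re * ∫ x in a..b, x ^ (-s.re - 1) := by
    rw [h2]; field_simp; ring
  rw [h3, h4, norm_mul, norm_neg]
  have h5 : ‖∫ x in a..b, (x : ℂ) ^ (-s - 1)‖ ≤ ∫ x in a..b, x ^ (-s.re - 1) := by
    apply intervalIntegral.norm_integral_le_of_norm_le hab
    · refine Eventually.of_forall fun t ht => ?_
      rw [Complex.norm_cpow_eq_rpow_re_of_pos (ha.trans ht.1)]
      simp
    · exact intervalIntegral.intervalIntegrable_rpow (Or.inr h0)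
  calc ‖s‖ * _ ≤ ‖s‖ * ∫ x in a..b, x ^ (-s.re - 1) := by gcongr
    _ = _ := by field_simp

lemma norm_neg_cpow {a : ℝ} (ha : 0 < a) (s : ℂ) : ‖(a : ℂ) ^ (-s)‖ = a ^ (-s.re) := by
  rw [Complex.norm_cpow_eq_rpow_re_of_pos ha]; simp

lemma sum_sub_integral {P : ℝ → ℝ} (hpos : ∀ x, 0 < x → 0 < P x)
    (hmono : ∀ x y, 0 < x → x ≤ y → P x ≤ P y) {s : ℂ} (hs : 0 < s.re)
    (hint : IntegrableOn (fun x => (P x : ℂ) ^ (-s)) (Ioi 0))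
    (hsum : Summable fun k : ℕ => (P (k + 1) : ℂ) ^ (-s)) :
    ‖(∑' k : ℕ, (P (k + 1) : ℂ) ^ (-s)) - ∫ x in Ioi 0, (P x : ℂ) ^ (-s)‖ ≤
      ‖s‖ / s.re * ∫ x in (0 : ℝ)..1, P x ^ (-s.re) := by
  have hintr : IntegrableOn (fun x => P x ^ (-s.re)) (Ioi 0) :=
    (integrableOn_congr_fun (fun x hx => norm_neg_cpow (hpos x hx) s) measurableSet_Ioi).1 hint.norm
  have ii : ∀ a b : ℝ, 0 ≤ a → 0 ≤ b → IntervalIntegrable (fun x => (P x : ℂ) ^ (-s)) volume a b := by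
    intro a b ha hb
    rw [intervalIntegrable_iff]
    apply hint.mono_set
    intro x hx
    exact lt_of_le_of_lt (le_min ha hb) hx.1
  have iir : ∀ a b : ℝ, 0 ≤ a → 0 ≤ b → IntervalIntegrable (fun x => P x ^ (-s.re)) volume a b := by
    intro a b ha hb
    rw [intervalIntegrable_iff]
    apply hintr.mono_set
    intro x hx
    exact lt_of_le_of_lt (le_min ha hb) hx.1
  have step : ∀ k : ℕ, ‖(P (k + 1) : ℂ) ^ (-s) - ∫ x in (k : ℝ)..((k + 1 : ℕ) : ℝ), (P x : ℂ) ^ (-s)‖ ≤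
      ‖s‖ / s.re * ((∫ x in (k : ℝ)..((k + 1 : ℕ) : ℝ), P x ^ (-s.re)) - P (k + 1) ^ (-s.re)) := by
    intro k
    have hk : (0 : ℝ) ≤ k := k.cast_nonneg
    have hk1 : (0 : ℝ) ≤ ((k + 1 : ℕ) : ℝ) := Nat.cast_nonneg _
    have hle : (k : ℝ) ≤ ((k + 1 : ℕ) : ℝ) := by push_cast; linarith
    have e1 : (P (k + 1) : ℂ) ^ (-s) - ∫ x in (k : ℝ)..((k + 1 : ℕ) : ℝ), (P x : ℂ) ^ (-s) =
        ∫ x in (k : ℝ)..((k + 1 : ℕ) : ℝ), ((P (k + 1) : ℂ) ^ (-s) - (P x : ℂ) ^ (-s)) := by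
      rw [intervalIntegral.integral_sub intervalIntegrable_const (ii _ _ hk hk1)]
      simp
    have e2 : ‖s‖ / s.re * ((∫ x in (k : ℝ)..((k + 1 : ℕ) : ℝ), P x ^ (-s.re)) - P (k + 1) ^ (-s.re)) =
        ∫ x in (k : ℝ)..((k + 1 : ℕ) : ℝ), ‖s‖ / s.re * (P x ^ (-s.re) - P (k + 1) ^ (-s.re)) := by
      rw [intervalIntegral.integral_const_mul,
        intervalIntegral.integral_sub (iir _ _ hk hk1) intervalIntegrable_const]
      simp
    rw [e1, e2]
    apply intervalIntegral.norm_integral_le_of_norm_le hle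
    · refine Eventually.of_forall fun t ht => ?_
      have ht0 : 0 < t := lt_of_le_of_lt hk ht.1
      have ht1 : t ≤ k + 1 := by have := ht.2; push_cast at this; exact this
      exact cpow_diff (hpos t ht0) (hmono _ _ ht0 ht1) hs
    · exact ((iir _ _ hk hk1).sub intervalIntegrable_const).const_mul _
  have lower : ∀ k : ℕ, ∫ x in ((k + 1 : ℕ) : ℝ)..((k + 1 + 1 : ℕ) : ℝ), P x ^ (-s.re) ≤
      P (k + 1) ^ (-s.re) := by
    intro k
    have hk : (0 : ℝ) ≤ k := k.cast_nonneg
    have := intervalIntegral.integral_mono_on (a := ((k + 1 : ℕ) : ℝ)) (b := ((k + 1 + 1 : ℕ) : ℝ))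
      (f := fun x => P x ^ (-s.re)) (g := fun _ => P (k + 1) ^ (-s.re)) (μ := volume)
      (by push_cast; linarith) (iir _ _ (by positivity) (by positivity)) intervalIntegrable_const
      (by
        intro x hx
        have hx1 : (k : ℝ) + 1 ≤ x := by have := hx.1; push_cast at this; exact this
        exact Real.rpow_le_rpow_of_nonpos (hpos _ (by positivity))
          (hmono _ _ (by positivity) hx1) (by linarith))
    simpa using this
  have acc : ∀ N : ℕ, ∫ x in (0 : ℝ)..((N + 1 : ℕ) : ℝ), P x ^ (-s.re) ≤
      (∫ x in (0 : ℝ)..1, P x ^ (-s.re)) + ∑ k ∈ Finset.range N, P (k + 1) ^ (-s.re) := by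
    intro N
    induction N with
    | zero => simp
    | succ N ih =>
      rw [Finset.sum_range_succ, ← intervalIntegral.integral_add_adjacent_intervals
        (iir 0 ((N + 1 : ℕ) : ℝ) le_rfl (by positivity)) (iir _ _ (by positivity) (by positivity))]
      have := lower N
      linarith
  have fin : ∀ N : ℕ, ‖(∑ k ∈ Finset.range (N + 1), (P (k + 1) : ℂ) ^ (-s)) -
      ∫ x in (0 : ℝ)..((N + 1 : ℕ) : ℝ), (P x : ℂ) ^ (-s)‖ ≤
      ‖s‖ / s.re * ∫ x in (0 : ℝ)..1, P x ^ (-s.re) := by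
    intro N
    have h1 := intervalIntegral.sum_integral_adjacent_intervals (f := fun x => (P x : ℂ) ^ (-s))
      (μ := volume) (a := fun k : ℕ => (k : ℝ)) (n := N + 1)
      (fun k _ => ii _ _ (by positivity) (by positivity))
    have h2 := intervalIntegral.sum_integral_adjacent_intervals (f := fun x => P x ^ (-s.re))
      (μ := volume) (a := fun k : ℕ => (k : ℝ)) (n := N + 1)
      (fun k _ => iir _ _ (by positivity) (by positivity))
    simp only [Nat.cast_zero] at h1 h2
    rw [← h1, ← Finset.sum_sub_distrib]
    refine (norm_sum_le _ _).trans ((Finset.sum_le_sum fun k _ => step k).trans ?_)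
    rw [← Finset.mul_sum, Finset.sum_sub_distrib, h2]
    have h3 := acc N
    have h4 : 0 ≤ P (N + 1) ^ (-s.re) := Real.rpow_nonneg (hpos _ (by positivity)).le _
    gcongr
    rw [Finset.sum_range_succ]
    linarith
  have t1 := hsum.hasSum.tendsto_sum_nat.comp (tendsto_add_atTop_nat 1)
  have t2 := intervalIntegral_tendsto_integral_Ioi 0 hint
    ((tendsto_natCast_atTop_atTop (R := ℝ)).comp (tendsto_add_atTop_nat 1))
  exact le_of_tendsto (t1.sub t2).norm (Eventually.of_forall fin)

/-- The quartic form. -/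
def P (y x : ℝ) : ℝ := x * y * (x + y) * (x + 2 * y)

lemma P_pos {y x : ℝ} (hy : 0 < y) (hx : 0 < x) : 0 < P y x := by unfold P; positivity

lemma P_mono {y : ℝ} (hy : 0 < y) (a b : ℝ) (ha : 0 < a) (hab : a ≤ b) : P y a ≤ P y b := by
  unfold P
  have hb : 0 < b := ha.trans_le hab
  gcongr

/-- The angular integral. -/
noncomputable def I (s : ℂ) : ℂ := ∫ x in Ioi (0 : ℝ), (P 1 x : ℂ) ^ (-s)

lemma image_eq : (fun t : ℝ => ((1 + t) ^ 2)⁻¹) '' Ioi 0 = Ioo 0 1 := by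
  ext v
  simp only [mem_image, mem_Ioi, mem_Ioo]
  constructor
  · rintro ⟨t, ht, rfl⟩
    exact ⟨by positivity, inv_lt_one_of_one_lt₀ (by nlinarith)⟩
  · rintro ⟨h0, h1⟩
    refine ⟨(Real.sqrt v)⁻¹ - 1, ?_, ?_⟩
    · have h2 : 0 < Real.sqrt v := Real.sqrt_pos.2 h0
      have h3 : Real.sqrt v < 1 := by rw [Real.sqrt_lt' one_pos]; simpa using h1
      have := (one_lt_inv₀ h2).2 h3
      linarith
    · simp [Real.sq_sqrt h0.le]

lemma integrand_eq (s : ℂ) (t : ℝ) (ht : 0 < t) :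
    |-2 * (1 + t) * (((1 + t) ^ 2)⁻¹) ^ 2| •
      ((((((1 + t) ^ 2)⁻¹ : ℝ) : ℂ)) ^ ((3 * s - 1) / 2 - 1) *
        (1 - ((((1 + t) ^ 2)⁻¹ : ℝ) : ℂ)) ^ ((1 - s) - 1)) = 2 * (P 1 t : ℂ) ^ (-s) := by
  have h1 : 0 < 1 + t := by linarith
  have e1 : |-2 * (1 + t) * (((1 + t) ^ 2)⁻¹) ^ 2| = 2 * ((1 + t) ^ 3)⁻¹ := by
    rw [show -2 * (1 + t) * (((1 + t) ^ 2)⁻¹) ^ 2 = -(2 * (1 + t) * (((1 + t) ^ 2)⁻¹) ^ 2) by ring,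
      abs_neg, abs_of_pos (by positivity)]
    field_simp
  have e2 : (1 - ((((1 + t) ^ 2)⁻¹ : ℝ) : ℂ)) = (((t * (t + 2)) * ((1 + t) ^ 2)⁻¹ : ℝ) : ℂ) := by
    rw [← Complex.ofReal_one, ← Complex.ofReal_sub]
    congr 1
    field_simp
    ring
  have e3 : P 1 t = (t * (t + 2)) * (1 + t) := by unfold P; ring
  have hp : 0 < t * (t + 2) := by positivity
  rw [e1, e2, e3, Complex.real_smul]
  have c1 : ((1 + t : ℝ) : ℂ) ≠ 0 := by exact_mod_cast h1.ne'
  have c2 : ((t * (t + 2) : ℝ) : ℂ) ≠ 0 := by exact_mod_cast hp.ne'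
  have l1 : ∀ z : ℂ, (((1 + t) : ℝ) : ℂ) ^ z = Complex.exp (Real.log (1 + t) * z) := by
    intro z; rw [Complex.cpow_def_of_ne_zero c1, Complex.ofReal_log h1.le]
  have l2 : ∀ z : ℂ, ((((1 + t) ^ 2)⁻¹ : ℝ) : ℂ) ^ z = Complex.exp (-2 * Real.log (1 + t) * z) := by
    intro z
    have : 0 < ((1 + t) ^ 2)⁻¹ := by positivity
    rw [Complex.cpow_def_of_ne_zero (by exact_mod_cast this.ne'), ← Complex.ofReal_log this.le,
      Real.log_inv, Real.log_pow]
    push_cast; ring_nf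
  have l3 : (((1 + t) ^ 3 : ℝ) : ℂ)⁻¹ = Complex.exp (-3 * Real.log (1 + t)) := by
    have := l1 (-3)
    rw [mul_comm, ← this, show (-3 : ℂ) = -((3 : ℕ) : ℂ) by norm_num, Complex.cpow_neg,
      Complex.cpow_natCast]
    push_cast; rfl
  rw [Complex.ofReal_mul (t * (t + 2)), Complex.ofReal_mul (t * (t + 2)),
    Complex.mul_cpow_ofReal_nonneg hp.le (by positivity),
    Complex.mul_cpow_ofReal_nonneg hp.le h1.le, l1, l2, l2, Complex.ofReal_mul, Complex.ofReal_inv,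
    l3, show 1 - s - 1 = -s by ring]
  have : Complex.exp (Real.log (1 + t) * -s) = Complex.exp (-3 * Real.log (1 + t)) *
    Complex.exp (-2 * Real.log (1 + t) * ((3 * s - 1) / 2 - 1)) *
    Complex.exp (-2 * Real.log (1 + t) * -s) := by
    rw [← Complex.exp_add, ← Complex.exp_add]; congr 1; ring
  rw [this]
  push_cast
  ring

lemma cov_facts {s : ℂ} (h1 : 1 / 3 < s.re) (h2 : s.re < 1) :
    IntegrableOn (fun x => (P 1 x : ℂ) ^ (-s)) (Ioi 0) ∧
      2 * I s = Complex.betaIntegral ((3 * s - 1) / 2) (1 - s) := by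
  have hd : ∀ x ∈ Ioi (0 : ℝ), HasDerivWithinAt (fun t : ℝ => ((1 + t) ^ 2)⁻¹)
      (-2 * (1 + x) * (((1 + x) ^ 2)⁻¹) ^ 2) (Ioi 0) x := by
    intro x hx
    have hx' : 0 < x := hx
    have := ((((hasDerivAt_id x).const_add 1).pow 2).inv (by simp; positivity)).hasDerivWithinAt
      (s := Ioi 0)
    refine this.congr_deriv ?_
    simp only [Pi.pow_apply, id]
    field_simp
    norm_num
    ring
  have hinj : InjOn (fun t : ℝ => ((1 + t) ^ 2)⁻¹) (Ioi 0) := by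
    intro a ha b hb hab
    have ha' : 0 < a := ha
    have hb' : 0 < b := hb
    have h := inv_injective hab
    have := (pow_left_inj₀ (by positivity) (by positivity) two_ne_zero).1 h
    linarith
  have hu : 0 < ((3 * s - 1) / 2).re := by
    rw [show (3 * s - 1) / 2 = ((3 / 2 : ℝ) : ℂ) * s - ((1 / 2 : ℝ) : ℂ) by push_cast; ring]
    rw [Complex.sub_re, Complex.re_ofReal_mul, Complex.ofReal_re]; linarith
  have hv : 0 < (1 - s).re := by simp; linarith
  have heq : EqOn (fun t : ℝ => |-2 * (1 + t) * (((1 + t) ^ 2)⁻¹) ^ 2| •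
      ((((((1 + t) ^ 2)⁻¹ : ℝ) : ℂ)) ^ ((3 * s - 1) / 2 - 1) *
        (1 - ((((1 + t) ^ 2)⁻¹ : ℝ) : ℂ)) ^ ((1 - s) - 1))) (fun t => 2 * (P 1 t : ℂ) ^ (-s))
      (Ioi 0) := fun t ht => integrand_eq s t ht
  have hb := Complex.betaIntegral_convergent hu hv
  rw [intervalIntegrable_iff_integrableOn_Ioo_of_le zero_le_one, ← image_eq,
    integrableOn_image_iff_integrableOn_abs_deriv_smul measurableSet_Ioi hd hinj,
    integrableOn_congr_fun heq measurableSet_Ioi] at hb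
  constructor
  · have := hb.const_mul (1 / 2)
    refine (integrableOn_congr_fun (fun x _ => ?_) measurableSet_Ioi).1 this
    ring
  · rw [Complex.betaIntegral, intervalIntegral.integral_of_le zero_le_one, integral_Ioc_eq_integral_Ioo,
      ← image_eq, integral_image_eq_integral_abs_deriv_smul measurableSet_Ioi hd hinj,
      setIntegral_congr_fun measurableSet_Ioi heq, I,
      integral_const_mul]

lemma scale_P {y : ℝ} (x : ℝ) : P y (y * x) = y ^ 4 * P 1 x := by unfold P; ring

lemma scale_cpow {y : ℝ} (hy : 0 < y) (s : ℂ) {x : ℝ} (hx : 0 < x) :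
    (P y (y * x) : ℂ) ^ (-s) = (y : ℂ) ^ (-(4 * s)) * (P 1 x : ℂ) ^ (-s) := by
  rw [scale_P, Complex.ofReal_mul, Complex.mul_cpow_ofReal_nonneg (by positivity)
    (P_pos one_pos hx).le]
  congr 1
  have hy0 : (y : ℂ) ≠ 0 := by exact_mod_cast hy.ne'
  have h4 : 0 < y ^ 4 := by positivity
  rw [Complex.cpow_def_of_ne_zero (by exact_mod_cast h4.ne'), Complex.cpow_def_of_ne_zero hy0,
    ← Complex.ofReal_log h4.le, ← Complex.ofReal_log hy.le, Real.log_pow]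
  push_cast; ring_nf

lemma integral_P {y : ℝ} (hy : 0 < y) {s : ℂ} (h1 : 1 / 3 < s.re) (h2 : s.re < 1) :
    IntegrableOn (fun x => (P y x : ℂ) ^ (-s)) (Ioi 0) ∧
      ∫ x in Ioi (0 : ℝ), (P y x : ℂ) ^ (-s) = (y : ℂ) ^ (1 - 4 * s) * I s := by
  have hc : EqOn (fun x => (P y (y * x) : ℂ) ^ (-s))
      (fun x => (y : ℂ) ^ (-(4 * s)) * (P 1 x : ℂ) ^ (-s)) (Ioi 0) :=
    fun x hx => scale_cpow hy s hx
  constructor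
  · have := integrableOn_Ioi_comp_mul_left_iff (fun x => (P y x : ℂ) ^ (-s)) 0 hy
    rw [mul_zero] at this
    rw [← this, integrableOn_congr_fun hc measurableSet_Ioi]
    exact (cov_facts h1 h2).1.const_mul _
  · have := integral_comp_mul_left_Ioi (fun x => (P y x : ℂ) ^ (-s)) 0 hy
    rw [mul_zero, setIntegral_congr_fun measurableSet_Ioi hc, integral_const_mul] at this
    have hy0 : (y : ℂ) ≠ 0 := by exact_mod_cast hy.ne'
    rw [sub_eq_add_neg, Complex.cpow_add _ _ hy0, Complex.cpow_one, mul_assoc, I, this,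
      Complex.real_smul]
    push_cast
    field_simp

lemma mem_B {s : ℂ} (hs : s ∈ Metric.ball (1 / 2 : ℂ) (1 / 10)) :
    2 / 5 < s.re ∧ s.re < 3 / 5 ∧ ‖s‖ < 3 / 5 := by
  rw [mem_ball_iff_norm] at hs
  have h1 := (Complex.abs_re_le_norm _).trans_lt hs
  have h2 : (s - 1 / 2).re = s.re - 1 / 2 := by
    rw [Complex.sub_re]; norm_num
  rw [h2, abs_lt] at h1
  refine ⟨by linarith, by linarith, ?_⟩
  have h3 : ‖s‖ ≤ ‖s - 1 / 2‖ + ‖(1 / 2 : ℂ)‖ := by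
    simpa using norm_add_le (s - 1 / 2) (1 / 2)
  have h4 : ‖(1 / 2 : ℂ)‖ = 1 / 2 := by norm_num
  linarith

lemma summable_u : Summable fun m : ℕ => ((m : ℝ) + 1) ^ (-(6 / 5) : ℝ) := by
  have h : Summable fun m : ℕ => (m : ℝ) ^ (-(6 / 5) : ℝ) := Real.summable_nat_rpow.2 (by norm_num)
  have := (summable_nat_add_iff 1).2 h
  simpa using this

lemma cube_bound {x σ : ℝ} (hx : 1 ≤ x) (hσ : 2 / 5 ≤ σ) : (x ^ 3) ^ (-σ) ≤ x ^ (-(6 / 5) : ℝ) := by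
  rw [← Real.rpow_natCast, ← Real.rpow_mul (by linarith)]
  apply Real.rpow_le_rpow_of_exponent_le hx
  push_cast; linarith

lemma term_bound {y x : ℝ} (hy : 1 ≤ y) (hx : 1 ≤ x) {s : ℂ} (hσ : 2 / 5 ≤ s.re) :
    ‖(P y x : ℂ) ^ (-s)‖ ≤ x ^ (-(6 / 5) : ℝ) := by
  rw [norm_neg_cpow (P_pos (by linarith) (by linarith))]
  refine le_trans ?_ (cube_bound hx hσ)
  apply Real.rpow_le_rpow_of_nonpos (by positivity) _ (by linarith)
  unfold P
  calc x ^ 3 = x * 1 * x * x := by ring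
    _ ≤ x * y * (x + y) * (x + 2 * y) := by gcongr <;> linarith

/-- Inner sum. -/
noncomputable def T (n : ℕ) (s : ℂ) : ℂ := ∑' m : ℕ, (P ((n : ℝ) + 1) ((m : ℝ) + 1) : ℂ) ^ (-s)

lemma one_le_cast (m : ℕ) : (1 : ℝ) ≤ (m : ℝ) + 1 := by
  have : (0 : ℝ) ≤ m := m.cast_nonneg
  linarith

lemma T_diff (n : ℕ) : DifferentiableOn ℂ (T n) (Metric.ball (1 / 2 : ℂ) (1 / 10)) := by
  refine Complex.differentiableOn_tsum_of_summable_norm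
    (F := fun (m : ℕ) (s : ℂ) => (P ((n : ℝ) + 1) ((m : ℝ) + 1) : ℂ) ^ (-s)) summable_u ?_ Metric.isOpen_ball ?_
  · intro m
    have := P_pos (y := (n : ℝ) + 1) (x := (m : ℝ) + 1) (by positivity) (by positivity)
    intro s _
    exact (DifferentiableAt.const_cpow (differentiableAt_id.neg)
      (Or.inl (by exact_mod_cast this.ne'))).differentiableWithinAt
  · intro m s hs
    exact term_bound (one_le_cast n) (one_le_cast m) (mem_B hs).1.le

lemma T_summable (n : ℕ) {s : ℂ} (hs : s ∈ Metric.ball (1 / 2 : ℂ) (1 / 10)) :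
    Summable fun m : ℕ => (P ((n : ℝ) + 1) ((m : ℝ) + 1) : ℂ) ^ (-s) :=
  Summable.of_norm_bounded summable_u fun m =>
    term_bound (one_le_cast n) (one_le_cast m) (mem_B hs).1.le

/-- The regularised inner sum. -/
noncomputable def g (n : ℕ) (s : ℂ) : ℂ := T n s - (((n : ℝ) + 1 : ℝ) : ℂ) ^ (1 - 4 * s) * I s

lemma I_eq {s : ℂ} (h1 : 1 / 3 < s.re) (h2 : s.re < 1) :
    I s = Complex.Gamma ((3 * s - 1) / 2) * Complex.Gamma (1 - s) /
      (2 * Complex.Gamma ((s + 1) / 2)) := by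
  have hu : 0 < ((3 * s - 1) / 2).re := by
    rw [show (3 * s - 1) / 2 = ((3 / 2 : ℝ) : ℂ) * s - ((1 / 2 : ℝ) : ℂ) by push_cast; ring]
    rw [Complex.sub_re, Complex.re_ofReal_mul, Complex.ofReal_re]; linarith
  have hv : 0 < (1 - s).re := by simp; linarith
  have hw : 0 < ((s + 1) / 2).re := by
    rw [show (s + 1) / 2 = (3 * s - 1) / 2 + (1 - s) by ring, Complex.add_re]; linarith
  have h := Complex.Gamma_mul_Gamma_eq_betaIntegral hu hv
  rw [show (3 * s - 1) / 2 + (1 - s) = (s + 1) / 2 by ring, ← (cov_facts h1 h2).2] at h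
  have h0 := Complex.Gamma_ne_zero_of_re_pos hw
  rw [h]
  field_simp

lemma ne_neg_nat {z : ℂ} (hz : 0 < z.re) (m : ℕ) : z ≠ -m := by
  rintro rfl
  simp at hz
  have : (0 : ℝ) ≤ m := m.cast_nonneg
  linarith

lemma I_diff : DifferentiableOn ℂ I (Metric.ball (1 / 2 : ℂ) (1 / 10)) := by
  have key : DifferentiableOn ℂ (fun s => Complex.Gamma ((3 * s - 1) / 2) * Complex.Gamma (1 - s) /
      (2 * Complex.Gamma ((s + 1) / 2))) (Metric.ball (1 / 2 : ℂ) (1 / 10)) := by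
    intro s hs
    obtain ⟨h1, h2, -⟩ := mem_B hs
    have hu : 0 < ((3 * s - 1) / 2).re := by
      rw [show (3 * s - 1) / 2 = ((3 / 2 : ℝ) : ℂ) * s - ((1 / 2 : ℝ) : ℂ) by push_cast; ring]
      rw [Complex.sub_re, Complex.re_ofReal_mul, Complex.ofReal_re]; linarith
    have hv : 0 < (1 - s).re := by simp; linarith
    have hw : 0 < ((s + 1) / 2).re := by
      rw [show (s + 1) / 2 = (3 * s - 1) / 2 + (1 - s) by ring, Complex.add_re]; linarith
    have d1 : DifferentiableAt ℂ (fun s => Complex.Gamma ((3 * s - 1) / 2)) s :=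
      DifferentiableAt.comp s (Complex.differentiableAt_Gamma _ (ne_neg_nat hu)) (by fun_prop)
    have d2 : DifferentiableAt ℂ (fun s => Complex.Gamma (1 - s)) s :=
      DifferentiableAt.comp s (Complex.differentiableAt_Gamma _ (ne_neg_nat hv)) (by fun_prop)
    have d3 : DifferentiableAt ℂ (fun s => Complex.Gamma ((s + 1) / 2)) s :=
      DifferentiableAt.comp s (Complex.differentiableAt_Gamma _ (ne_neg_nat hw)) (by fun_prop)
    exact ((d1.mul d2).div (d3.const_mul 2)
      (mul_ne_zero two_ne_zero (Complex.Gamma_ne_zero_of_re_pos hw))).differentiableWithinAt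
  exact key.congr fun s hs => I_eq (by linarith [(mem_B hs).1]) (by linarith [(mem_B hs).2.1])

lemma g_diff (n : ℕ) : DifferentiableOn ℂ (g n) (Metric.ball (1 / 2 : ℂ) (1 / 10)) := by
  refine (T_diff n).sub (DifferentiableOn.mul ?_ I_diff)
  intro s _
  refine (DifferentiableAt.const_cpow (by fun_prop) (Or.inl ?_)).differentiableWithinAt
  exact_mod_cast (by positivity : (0 : ℝ) < (n : ℝ) + 1).ne'

lemma int_bound {y σ : ℝ} (hy : 1 ≤ y) (h1 : 2 / 5 < σ) (h2 : σ < 3 / 5)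
    (hi : IntervalIntegrable (fun x => P y x ^ (-σ)) volume 0 1) :
    ∫ x in (0 : ℝ)..1, P y x ^ (-σ) ≤ 5 / 2 * y ^ (-(6 / 5) : ℝ) := by
  have hy0 : 0 < y := by linarith
  have hi2 : IntervalIntegrable (fun x : ℝ => (y ^ 3) ^ (-σ) * x ^ (-σ)) volume 0 1 :=
    (intervalIntegral.intervalIntegrable_rpow' (by linarith)).const_mul _
  have h3 : ∫ x in (0 : ℝ)..1, P y x ^ (-σ) ≤ ∫ x in (0 : ℝ)..1, (y ^ 3) ^ (-σ) * x ^ (-σ) := by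
    refine intervalIntegral.integral_mono_on_of_le_Ioo zero_le_one hi hi2 ?_
    intro x hx
    have hx0 : 0 < x := hx.1
    rw [← Real.mul_rpow (by positivity) hx0.le]
    apply Real.rpow_le_rpow_of_nonpos (by positivity) _ (by linarith)
    unfold P
    calc y ^ 3 * x = x * y * y * y := by ring
      _ ≤ x * y * (x + y) * (x + 2 * y) := by gcongr <;> linarith
  refine h3.trans ?_
  rw [intervalIntegral.integral_const_mul, integral_rpow (Or.inl (by linarith))]
  have h4 : (1 : ℝ) ^ (-σ + 1) - 0 ^ (-σ + 1) = 1 := by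
    rw [Real.one_rpow, Real.zero_rpow (by linarith)]; ring
  rw [h4, mul_comm]
  have h5 := cube_bound hy h1.le
  have h6 : 1 / (-σ + 1) ≤ 5 / 2 := by
    rw [div_le_div_iff₀ (by linarith) (by norm_num)]; linarith
  have h7 : 0 ≤ (y ^ 3) ^ (-σ) := by positivity
  gcongr

lemma g_bound (n : ℕ) {s : ℂ} (hs : s ∈ Metric.ball (1 / 2 : ℂ) (1 / 10)) :
    ‖g n s‖ ≤ 15 / 4 * ((n : ℝ) + 1) ^ (-(6 / 5) : ℝ) := by
  obtain ⟨h1, h2, h3⟩ := mem_B hs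
  have hy : (0 : ℝ) < (n : ℝ) + 1 := by positivity
  obtain ⟨i1, i2⟩ := integral_P hy (s := s) (by linarith) (by linarith)
  have h := sum_sub_integral (fun x hx => P_pos hy hx) (P_mono hy) (by linarith) i1 (T_summable n hs)
  rw [i2] at h
  have hi : IntervalIntegrable (fun x => P ((n : ℝ) + 1) x ^ (-s.re)) volume 0 1 := by
    rw [intervalIntegrable_iff_integrableOn_Ioc_of_le zero_le_one]
    exact ((integrableOn_congr_fun (fun x hx => norm_neg_cpow (P_pos hy hx) s)
      measurableSet_Ioi).1 i1.norm).mono_set (fun x hx => hx.1)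
  have hb := int_bound (one_le_cast n) h1 h2 hi
  have h5 : ‖s‖ / s.re ≤ 3 / 2 := by
    rw [div_le_div_iff₀ (by linarith) (by norm_num)]; linarith
  refine h.trans ?_
  calc _ ≤ 3 / 2 * (5 / 2 * ((n : ℝ) + 1) ^ (-(6 / 5) : ℝ)) := by
        apply mul_le_mul h5 hb _ (by norm_num)
        apply intervalIntegral.integral_nonneg_of_ae_restrict zero_le_one
        refine (ae_restrict_iff' measurableSet_Icc).2 (Eventually.of_forall fun x hx => ?_)
        refine Real.rpow_nonneg ?_ _
        have := hx.1
        unfold P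
        positivity
    _ = _ := by ring

/-- The regular part. -/
noncomputable def G (s : ℂ) : ℂ := ∑' n : ℕ, g n s

lemma G_diff : DifferentiableOn ℂ G (Metric.ball (1 / 2 : ℂ) (1 / 10)) :=
  Complex.differentiableOn_tsum_of_summable_norm (summable_u.mul_left (15 / 4)) g_diff
    Metric.isOpen_ball fun n _ hs => g_bound n hs

lemma summable_double {s : ℂ} (hs : 1 / 2 < s.re) :
    Summable fun p : ℕ × ℕ => (P ((p.2 : ℝ) + 1) ((p.1 : ℝ) + 1) : ℂ) ^ (-s) := by
  have h : Summable fun m : ℕ => ((m : ℝ) + 1) ^ (-(2 * s.re)) := by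
    have h : Summable fun m : ℕ => (m : ℝ) ^ (-(2 * s.re)) :=
      Real.summable_nat_rpow.2 (by linarith)
    have := (summable_nat_add_iff 1).2 h
    simpa using this
  have h2 := h.mul_of_nonneg h (fun m => by positivity) (fun m => by positivity)
  refine Summable.of_norm_bounded h2 fun p => ?_
  have hx : (0 : ℝ) < (p.1 : ℝ) + 1 := by positivity
  have hy : (0 : ℝ) < (p.2 : ℝ) + 1 := by positivity
  rw [norm_neg_cpow (P_pos hy hx)]
  generalize (p.1 : ℝ) + 1 = x at *
  generalize (p.2 : ℝ) + 1 = y at *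
  rw [← Real.mul_rpow hx.le hy.le]
  have : (x * y) ^ (-(2 * s.re)) = ((x * y) ^ 2) ^ (-s.re) := by
    rw [← Real.rpow_natCast, ← Real.rpow_mul (by positivity)]
    congr 1; push_cast; ring
  rw [this]
  apply Real.rpow_le_rpow_of_nonpos (by positivity) _ (by linarith)
  unfold P
  nlinarith [mul_pos hx hy, mul_pos (mul_pos hx hy) (mul_pos hx hx),
    mul_pos (mul_pos hx hy) (mul_pos hy hy), mul_pos (mul_pos hx hy) (mul_pos hx hy)]

lemma double_eq {s : ℂ} (hB : s ∈ Metric.ball (1 / 2 : ℂ) (1 / 10)) (hs : 1 / 2 < s.re) :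
    ∑' p : ℕ × ℕ, (P ((p.2 : ℝ) + 1) ((p.1 : ℝ) + 1) : ℂ) ^ (-s) =
      riemannZeta (4 * s - 1) * I s + G s := by
  have h1 : ∑' p : ℕ × ℕ, (P ((p.2 : ℝ) + 1) ((p.1 : ℝ) + 1) : ℂ) ^ (-s) = ∑' n, T n s := by
    have h := (summable_double hs).prod_symm
    rw [← (Equiv.prodComm ℕ ℕ).tsum_eq]
    exact h.tsum_prod
  have hre : 1 < (4 * s - 1).re := by
    rw [show (4 : ℂ) = ((4 : ℝ) : ℂ) by norm_num, Complex.sub_re, Complex.re_ofReal_mul]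
    simp; linarith
  have hc : ∀ n : ℕ, (((n : ℝ) + 1 : ℝ) : ℂ) ^ (1 - 4 * s) = 1 / ((n : ℂ) + 1) ^ (4 * s - 1) := by
    intro n
    rw [show 1 - 4 * s = -(4 * s - 1) by ring, Complex.cpow_neg]
    push_cast
    simp
  have hz : Summable fun n : ℕ => (((n : ℝ) + 1 : ℝ) : ℂ) ^ (1 - 4 * s) := by
    have := (summable_nat_add_iff 1).2 (Complex.summable_one_div_nat_cpow.2 hre)
    simp only [hc]
    simpa using this
  have hg : Summable fun n : ℕ => g n s :=
    Summable.of_norm_bounded (summable_u.mul_left (15 / 4)) fun n => g_bound n hB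
  rw [h1, zeta_eq_tsum_one_div_nat_add_one_cpow hre, G, ← tsum_mul_right]
  simp only [← hc]
  rw [← (hz.mul_right _).tsum_add hg]
  congr 1
  ext n
  simp [g]

lemma punctured_preconnected (c : ℂ) (r : ℝ) (hr : 0 < r) :
    IsPreconnected (Metric.ball c r \ {c}) := by
  have hA : IsPreconnected (Metric.ball c r ∩ {z | c.re < z.re}) :=
    ((convex_ball c r).inter (convex_halfSpace_re_gt _)).isPreconnected
  have hB : IsPreconnected (Metric.ball c r ∩ {z | c.im < z.im}) :=
    ((convex_ball c r).inter (convex_halfSpace_im_gt _)).isPreconnected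
  have hC : IsPreconnected (Metric.ball c r ∩ {z | z.re < c.re}) :=
    ((convex_ball c r).inter (convex_halfSpace_re_lt _)).isPreconnected
  have hD : IsPreconnected (Metric.ball c r ∩ {z | z.im < c.im}) :=
    ((convex_ball c r).inter (convex_halfSpace_im_lt _)).isPreconnected
  have hm : ∀ a b : ℝ, |a| ≤ r / 4 → |b| ≤ r / 4 → c + (⟨a, b⟩ : ℂ) ∈ Metric.ball c r := by
    intro a b ha hb
    rw [mem_ball_iff_norm, add_sub_cancel_left]
    have := Complex.norm_le_abs_re_add_abs_im (⟨a, b⟩ : ℂ)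
    simp only at this
    linarith
  have hp : |r / 4| ≤ r / 4 := by rw [abs_of_pos (by linarith)]
  have hn : |-(r / 4)| ≤ r / 4 := by rw [abs_neg]; exact hp
  have h1 := hA.union (c + (⟨r / 4, r / 4⟩ : ℂ)) (by exact ⟨hm _ _ hp hp, by simp [hr]⟩)
    (by exact ⟨hm _ _ hp hp, by simp [hr]⟩) hB
  have h2 := h1.union (c + (⟨-(r / 4), r / 4⟩ : ℂ)) (by exact Or.inr ⟨hm _ _ hn hp, by simp [hr]⟩)
    (by exact ⟨hm _ _ hn hp, by simp [hr]⟩) hC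
  have h3 := h2.union (c + (⟨-(r / 4), -(r / 4)⟩ : ℂ)) (by exact Or.inr ⟨hm _ _ hn hn, by simp [hr]⟩)
    (by exact ⟨hm _ _ hn hn, by simp [hr]⟩) hD
  convert h3 using 1
  ext z
  simp only [Set.mem_sdiff, mem_singleton_iff, mem_union, mem_inter_iff, mem_ofPred_eq, Complex.ext_iff]
  constructor
  · rintro ⟨h, h'⟩
    rcases lt_trichotomy z.re c.re with h1 | h1 | h1
    · exact Or.inl (Or.inr ⟨h, h1⟩)
    · rcases lt_trichotomy z.im c.im with h2 | h2 | h2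
      · exact Or.inr ⟨h, h2⟩
      · exact absurd ⟨h1, h2⟩ h'
      · exact Or.inl (Or.inl (Or.inr ⟨h, h2⟩))
    · exact Or.inl (Or.inl (Or.inl ⟨h, h1⟩))
  · rintro (((⟨h, h'⟩ | ⟨h, h'⟩) | ⟨h, h'⟩) | ⟨h, h'⟩)
    · exact ⟨h, fun e => h'.ne' e.1⟩
    · exact ⟨h, fun e => h'.ne' e.2⟩
    · exact ⟨h, fun e => h'.ne e.1⟩
    · exact ⟨h, fun e => h'.ne e.2⟩

lemma value : (6 : ℂ) ^ (1 / 2 : ℂ) * (1 / 4 * I (1 / 2)) =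
    (((Real.sqrt 3 * Real.Gamma (1 / 4) ^ 2 / (8 * Real.sqrt Real.pi) : ℝ)) : ℂ) := by
  rw [I_eq (by norm_num) (by norm_num)]
  have e6 : (6 : ℂ) ^ (1 / 2 : ℂ) = ((Real.sqrt 6 : ℝ) : ℂ) := by
    rw [Real.sqrt_eq_rpow, Complex.ofReal_cpow (by norm_num)]
    norm_num
  have a1 : ((3 * (1 / 2) - 1) / 2 : ℂ) = ((1 / 4 : ℝ) : ℂ) := by norm_num
  have a2 : (1 - 1 / 2 : ℂ) = ((1 / 2 : ℝ) : ℂ) := by norm_num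
  have a3 : ((1 / 2 + 1) / 2 : ℂ) = ((3 / 4 : ℝ) : ℂ) := by norm_num
  rw [e6, a1, a2, a3, Complex.Gamma_ofReal, Complex.Gamma_ofReal, Complex.Gamma_ofReal]
  rw [show (1 / 4 : ℂ) = ((1 / 4 : ℝ) : ℂ) by norm_num, show (2 : ℂ) = ((2 : ℝ) : ℂ) by norm_num]
  simp only [← Complex.ofReal_mul, ← Complex.ofReal_div]
  rw [Complex.ofReal_inj]
  have hr := Real.Gamma_mul_Gamma_one_sub (1 / 4)
  rw [show (1 - 1 / 4 : ℝ) = 3 / 4 by norm_num, show Real.pi * (1 / 4) = Real.pi / 4 by ring,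
    Real.sin_pi_div_four] at hr
  have hg : 0 < Real.Gamma (3 / 4) := Real.Gamma_pos_of_pos (by norm_num)
  have hg1 : 0 < Real.Gamma (1 / 4) := Real.Gamma_pos_of_pos (by norm_num)
  have hp := Real.sqrt_pos.2 Real.pi_pos
  have hpp := Real.mul_self_sqrt Real.pi_pos.le
  have h2 : 0 < Real.sqrt 2 := Real.sqrt_pos.2 (by norm_num)
  have h22 := Real.mul_self_sqrt (show (0 : ℝ) ≤ 2 by norm_num)
  have h6 : Real.sqrt 6 = Real.sqrt 2 * Real.sqrt 3 := by
    rw [← Real.sqrt_mul (by norm_num)]; norm_num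
  rw [Real.Gamma_one_half_eq, h6]
  have hr' : Real.Gamma (1 / 4) * Real.Gamma (3 / 4) * Real.sqrt 2 = 2 * Real.pi := by
    rw [hr]; field_simp
  generalize Real.Gamma (3 / 4) = c at *
  generalize Real.Gamma (1 / 4) = a at *
  field_simp
  rw [Real.sq_sqrt Real.pi_pos.le]
  linear_combination (-4 : ℝ) * Real.sqrt 2 * hr' + 4 * a * c * h22

end SO5

theorem stmt7 (Z : ℂ → ℂ)
    (hhol : DifferentiableOn ℂ Z
      {s : ℂ | 1 / 4 < s.re ∧ s ≠ 1 / 2 ∧ s ≠ 1 / 3})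
    (hser : ∀ s : ℂ, 1 / 2 < s.re →
      Z s = (6 : ℂ) ^ s * ∑' p : ℕ × ℕ,
        ((((p.1 + 1) * (p.2 + 1) * ((p.1 + 1) + (p.2 + 1)) *
          ((p.1 + 1) + 2 * (p.2 + 1)) : ℕ) : ℂ)) ^ (-s)) :
    Tendsto (fun s : ℂ => (s - 1 / 2) * Z s) (𝓝[≠] (1 / 2))
      (𝓝 (((Real.sqrt 3 * Real.Gamma (1 / 4) ^ 2 /
        (8 * Real.sqrt Real.pi) : ℝ)) : ℂ)) := by
  set U : Set ℂ := Metric.ball (1 / 2 : ℂ) (1 / 10) \ {1 / 2} with hU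
  have hUo : IsOpen U := Metric.isOpen_ball.sdiff isClosed_singleton
  have hZ : DifferentiableOn ℂ Z U := by
    refine hhol.mono ?_
    rintro s ⟨hs, hs'⟩
    obtain ⟨h1, h2, h3⟩ := SO5.mem_B hs
    refine ⟨by linarith, hs', ?_⟩
    rintro rfl
    norm_num at h1
  have d6 : Differentiable ℂ fun s : ℂ => (6 : ℂ) ^ s := fun s =>
    DifferentiableAt.const_cpow differentiableAt_id (Or.inl (by norm_num))
  have hF : DifferentiableOn ℂ (fun s => (6 : ℂ) ^ s *
      (riemannZeta (4 * s - 1) * SO5.I s + SO5.G s)) U := by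
    refine d6.differentiableOn.mul (DifferentiableOn.add (DifferentiableOn.mul ?_
      (SO5.I_diff.mono Set.sdiff_subset)) (SO5.G_diff.mono Set.sdiff_subset))
    rintro s ⟨hs, hs'⟩
    refine (DifferentiableAt.comp s (differentiableAt_riemannZeta ?_)
      (by fun_prop)).differentiableWithinAt
    intro h
    exact hs' (show s = 1 / 2 by linear_combination h / 4)
  have hagree : ∀ s ∈ Metric.ball (1 / 2 : ℂ) (1 / 10), 1 / 2 < s.re → Z s = (6 : ℂ) ^ s *
      (riemannZeta (4 * s - 1) * SO5.I s + SO5.G s) := by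
    intro s hs h
    rw [hser s h, ← SO5.double_eq hs h]
    congr 1
    refine tsum_congr fun p => ?_
    congr 1
    unfold SO5.P
    push_cast
    ring
  have hz0 : (1 / 2 + 1 / 20 : ℂ) ∈ U := by
    refine ⟨?_, ?_⟩
    · rw [mem_ball_iff_norm]; norm_num
    · intro h
      have h' : (1 / 2 + 1 / 20 : ℂ) = 1 / 2 := h
      norm_num at h'
  have heq := (hZ.analyticOnNhd hUo).eqOn_of_preconnected_of_eventuallyEq (hF.analyticOnNhd hUo)
    (SO5.punctured_preconnected _ _ (by norm_num)) hz0 (by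
      have o : IsOpen {s : ℂ | 1 / 2 < s.re} := isOpen_lt continuous_const Complex.continuous_re
      filter_upwards [hUo.mem_nhds hz0, o.mem_nhds (by
        show (1 / 2 : ℝ) < (1 / 2 + 1 / 20 : ℂ).re
        norm_num)] with s hs hs'
      exact hagree s hs.1 hs')
  have hUn : U ∈ 𝓝[≠] (1 / 2 : ℂ) := by
    rw [hU, Set.sdiff_eq]
    exact inter_mem (mem_nhdsWithin_of_mem_nhds (Metric.ball_mem_nhds _ (by norm_num)))
      self_mem_nhdsWithin
  have hb : Metric.ball (1 / 2 : ℂ) (1 / 10) ∈ 𝓝 (1 / 2 : ℂ) := Metric.ball_mem_nhds _ (by norm_num)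
  have t6 : Tendsto (fun s : ℂ => (6 : ℂ) ^ s) (𝓝[≠] (1 / 2)) (𝓝 ((6 : ℂ) ^ (1 / 2 : ℂ))) :=
    (d6.continuous.tendsto _).mono_left nhdsWithin_le_nhds
  have tI : Tendsto SO5.I (𝓝[≠] (1 / 2)) (𝓝 (SO5.I (1 / 2))) :=
    ((SO5.I_diff.differentiableAt hb).continuousAt.tendsto).mono_left nhdsWithin_le_nhds
  have tG : Tendsto SO5.G (𝓝[≠] (1 / 2)) (𝓝 (SO5.G (1 / 2))) :=
    ((SO5.G_diff.differentiableAt hb).continuousAt.tendsto).mono_left nhdsWithin_le_nhds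
  have ts : Tendsto (fun s : ℂ => s - 1 / 2) (𝓝[≠] (1 / 2)) (𝓝 0) := by
    have : Tendsto (fun s : ℂ => s - 1 / 2) (𝓝 (1 / 2)) (𝓝 (1 / 2 - 1 / 2)) :=
      (continuous_id.sub continuous_const).tendsto _
    rw [sub_self] at this
    exact this.mono_left nhdsWithin_le_nhds
  have tz : Tendsto (fun s : ℂ => (s - 1 / 2) * riemannZeta (4 * s - 1)) (𝓝[≠] (1 / 2))
      (𝓝 (1 / 4)) := by
    have m : Tendsto (fun s : ℂ => 4 * s - 1) (𝓝[≠] (1 / 2)) (𝓝[≠] 1) := by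
      apply tendsto_nhdsWithin_of_tendsto_nhds_of_eventually_within
      · have : Tendsto (fun s : ℂ => 4 * s - 1) (𝓝 (1 / 2)) (𝓝 (4 * (1 / 2) - 1)) :=
          Continuous.tendsto (by fun_prop) _
        rw [show (4 * (1 / 2) - 1 : ℂ) = 1 by norm_num] at this
        exact this.mono_left nhdsWithin_le_nhds
      · filter_upwards [self_mem_nhdsWithin] with s hs h
        have h' : 4 * s - 1 = 1 := h
        exact hs (show s = 1 / 2 by linear_combination h' / 4)
    have := (riemannZeta_residue_one.comp m).const_mul (1 / 4)
    rw [mul_one] at this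
    refine this.congr fun s => ?_
    simp only [Function.comp]
    ring
  have main := t6.mul ((tz.mul tI).add (ts.mul tG))
  rw [zero_mul, add_zero, SO5.value] at main
  refine main.congr' ?_
  filter_upwards [hUn] with s hs
  rw [heq hs]
  ring
end

section
/- For Re(s) > 1, the Witten zeta function of so(5) has the integral representation ζ_{so(5)}(s) = (6^s / (2πi Γ(s))) ∫_{c−i∞}^{c+i∞} Γ(s+z) Γ(−z) ζ_{MT,2}(s, s−z, 2s+z) dz for any c with −Re(s) < c < 0. -/
open Filter Topology Complex

/-- The Mordell–Tornheim double zeta function, defined by its double series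
(indexed so that `m = p.1 + 1 ≥ 1`, `n = p.2 + 1 ≥ 1`). -/
noncomputable def zetaMT (s₁ s₂ s₃ : ℂ) : ℂ :=
  ∑' p : ℕ × ℕ, ((p.1 + 1 : ℕ) : ℂ) ^ (-s₁) * ((p.2 + 1 : ℕ) : ℂ) ^ (-s₂) *
    ((p.1 + p.2 + 2 : ℕ) : ℂ) ^ (-s₃)

/-- The Witten zeta function of `so(5)`, for `Re s > 1/2`, as a double series. -/
noncomputable def zetaSO5 (s : ℂ) : ℂ :=
  (6 : ℂ) ^ s * ∑' p : ℕ × ℕ,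
    ((((p.1 + 1) * (p.2 + 1) * ((p.1 + 1) + (p.2 + 1)) *
      ((p.1 + 1) + 2 * (p.2 + 1)) : ℕ) : ℂ)) ^ (-s)


section Aux
open MeasureTheory

lemma so5_cpow_pos {x : ℝ} (hx : 0 < x) (w : ℂ) :
    (x : ℂ) ^ w = Complex.exp ((Real.log x : ℂ) * w) := by
  rw [Complex.cpow_def_of_ne_zero (by exact_mod_cast hx.ne'), Complex.ofReal_log hx.le]

lemma so5_exp_log {x : ℝ} (hx : 0 < x) :
    (x : ℂ) = Complex.exp (Real.log x : ℂ) := by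
  rw [← Complex.ofReal_exp, Real.exp_log hx]

lemma so5_image : (fun t : ℝ => t / (1 - t)) '' Set.Ioo 0 1 = Set.Ioi 0 := by
  ext x
  simp only [Set.mem_image, Set.mem_Ioo, Set.mem_Ioi]
  constructor
  · rintro ⟨t, ⟨h0, h1⟩, rfl⟩
    exact div_pos h0 (by linarith)
  · intro hx
    refine ⟨x / (1 + x), ⟨by positivity, ?_⟩, ?_⟩
    · rw [div_lt_one (by positivity)]; linarith
    · have : (1 + x) ≠ 0 := by positivity
      field_simp
      simp

lemma so5_deriv : ∀ t ∈ Set.Ioo (0 : ℝ) 1,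
    HasDerivWithinAt (fun t : ℝ => t / (1 - t)) (1 / (1 - t) ^ 2) (Set.Ioo 0 1) t := by
  intro t ht
  have h1 : (1 - t) ≠ 0 := by have := ht.2; intro h; linarith
  have := (hasDerivAt_id t).div ((hasDerivAt_const t (1 : ℝ)).sub (hasDerivAt_id t)) (by simpa using h1)
  convert! this.hasDerivWithinAt using 1
  simp

lemma so5_inj : Set.InjOn (fun t : ℝ => t / (1 - t)) (Set.Ioo 0 1) := by
  intro a ha b hb h
  have h1 : (1 - a) ≠ 0 := by have := ha.2; intro h; linarith
  have h2 : (1 - b) ≠ 0 := by have := hb.2; intro h; linarith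
  simp only at h
  rw [div_eq_div_iff h1 h2] at h
  linarith

lemma so5_integrand (s w : ℂ) (t : ℝ) (ht : t ∈ Set.Ioo (0 : ℝ) 1) :
    |1 / (1 - t) ^ 2| • (((t / (1 - t) : ℝ) : ℂ) ^ (w - 1) •
      ((1 + (t / (1 - t) : ℝ) : ℝ) : ℂ) ^ (-s)) =
    (t : ℂ) ^ (w - 1) * (1 - (t : ℂ)) ^ ((s - w) - 1) := by
  have h0 : 0 < t := ht.1
  have h1 : 0 < 1 - t := by have := ht.2; linarith
  have e1 : (1 : ℝ) + t / (1 - t) = (1 - t)⁻¹ := by field_simp; ring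
  have e2 : |1 / (1 - t) ^ 2| = (1 - t)⁻¹ ^ 2 := by
    rw [abs_of_pos (by positivity)]; simp
  have e3 : (1 - (t : ℂ)) = ((1 - t : ℝ) : ℂ) := by push_cast; ring
  rw [e1, e2, e3, so5_cpow_pos (div_pos h0 h1), so5_cpow_pos (inv_pos.2 h1), so5_cpow_pos h0,
    so5_cpow_pos h1, Real.log_div h0.ne' h1.ne', Real.log_inv, Complex.real_smul, smul_eq_mul,
    Complex.ofReal_pow, so5_exp_log (inv_pos.2 h1), Real.log_inv, ← Complex.exp_nat_mul,
    ← Complex.exp_add, ← Complex.exp_add, ← Complex.exp_add]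
  congr 1
  push_cast
  ring

lemma so5_mellinConv (s w : ℂ) (hw : 0 < w.re) (hsw : 0 < (s - w).re) :
    MellinConvergent (fun x : ℝ => ((1 + x : ℝ) : ℂ) ^ (-s)) w := by
  rw [MellinConvergent, ← so5_image,
    integrableOn_image_iff_integrableOn_abs_deriv_smul measurableSet_Ioo so5_deriv so5_inj]
  rw [integrableOn_congr_fun (so5_integrand s w) measurableSet_Ioo]
  have := betaIntegral_convergent hw hsw
  rw [intervalIntegrable_iff_integrableOn_Ioo_of_le zero_le_one] at this
  exact this

lemma so5_mellin (s w : ℂ) (hw : 0 < w.re) (hsw : 0 < (s - w).re) :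
    mellin (fun x : ℝ => ((1 + x : ℝ) : ℂ) ^ (-s)) w =
      Complex.Gamma w * Complex.Gamma (s - w) / Complex.Gamma s := by
  rw [mellin, ← so5_image,
    integral_image_eq_integral_abs_deriv_smul measurableSet_Ioo so5_deriv so5_inj,
    setIntegral_congr_fun measurableSet_Ioo (so5_integrand s w)]
  have := betaIntegral_eq_Gamma_mul_div w (s - w) hw hsw
  rw [betaIntegral, intervalIntegral.integral_of_le zero_le_one, integral_Ioc_eq_integral_Ioo] at this
  rw [this]; congr 2; ring

lemma so5_norm_Gamma {w : ℂ} (hw : 0 < w.re) : ‖Complex.Gamma w‖ ≤ Real.Gamma w.re := by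
  rw [Complex.Gamma_eq_integral hw, Complex.GammaIntegral, Real.Gamma_eq_integral hw]
  refine (norm_integral_le_integral_norm _).trans (le_of_eq ?_)
  refine setIntegral_congr_fun measurableSet_Ioi fun x hx => ?_
  simp only [norm_mul, Complex.norm_real, Real.norm_eq_abs, Real.abs_exp]
  rw [Complex.norm_cpow_eq_rpow_re_of_pos hx]
  simp

lemma so5_cont_Gamma (a b : ℂ) (h : 0 < a.re) (hb : b.re = 0) :
    Continuous fun t : ℝ => Complex.Gamma (a + t * b) := by
  rw [continuous_iff_continuousAt]
  intro t
  refine ContinuousAt.comp (f := fun t : ℝ => a + t * b) (g := Complex.Gamma) ?_ (by fun_prop)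
  refine (Complex.differentiableAt_Gamma _ ?_).continuousAt
  intro m hm
  have := congrArg Complex.re hm
  simp [hb] at this
  have : (0 : ℝ) ≤ m := Nat.cast_nonneg m
  linarith

lemma so5_integrable (s : ℂ) (a : ℝ) (ha : 0 < a) (has : a < s.re) :
    Integrable fun t : ℝ => Complex.Gamma (a + t * I) * Complex.Gamma (s - (a + t * I)) := by
  set C := Real.Gamma (a + 2) * Real.Gamma (s.re - a) with hC
  have hint : Integrable fun t : ℝ => C * (max 1 (a ^ 2)⁻¹ * (1 + t ^ 2)⁻¹) :=
    (integrable_inv_one_add_sq.const_mul _).const_mul _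
  refine hint.mono' ?_ (Filter.Eventually.of_forall fun t => ?_)
  · apply Continuous.aestronglyMeasurable
    refine (so5_cont_Gamma a I (by simpa using ha) (by simp)).mul ?_
    have := so5_cont_Gamma (s - a) (-I) (by simpa using has) (by simp)
    convert this using 3
    ring
  · set w : ℂ := a + t * I with hw
    have hre : w.re = a := by simp [hw]
    have him : w.im = t := by simp [hw]
    have hw0 : w ≠ 0 := by intro h; rw [h] at hre; simp at hre; linarith
    have hw1 : w + 1 ≠ 0 := by
      intro h; have := congrArg Complex.re h; simp [hre] at this; linarith
    have e1 : Complex.Gamma (w + 2) = (w + 1) * (w * Complex.Gamma w) := by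
      rw [← Complex.Gamma_add_one w hw0, ← Complex.Gamma_add_one (w + 1) hw1]; congr 1; ring
    have b1 : ‖Complex.Gamma (w + 2)‖ ≤ Real.Gamma (a + 2) := by
      have := so5_norm_Gamma (w := w + 2) (by simp [hre]; linarith)
      simpa [hre] using this
    have b2 : ‖Complex.Gamma (s - w)‖ ≤ Real.Gamma (s.re - a) := by
      have := so5_norm_Gamma (w := s - w) (by simp [hre]; linarith)
      simpa [hre] using this
    have n1 : ‖w‖ ^ 2 = a ^ 2 + t ^ 2 := by
      rw [Complex.sq_norm, Complex.normSq_apply, hre, him]; ring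
    have n2 : ‖w + 1‖ ^ 2 = (a + 1) ^ 2 + t ^ 2 := by
      rw [Complex.sq_norm, Complex.normSq_apply]; simp [hre, him]; ring
    have n3 : ‖w‖ ≤ ‖w + 1‖ := by
      apply le_of_sq_le_sq _ (norm_nonneg _)
      rw [n1, n2]; nlinarith
    have n4 : a ^ 2 + t ^ 2 ≤ ‖w + 1‖ * ‖w‖ := by
      rw [← n1, sq]; exact mul_le_mul_of_nonneg_right n3 (norm_nonneg _)
    have hpos : 0 < a ^ 2 + t ^ 2 := by positivity
    have b3 : (a ^ 2 + t ^ 2) * ‖Complex.Gamma w‖ ≤ Real.Gamma (a + 2) := by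
      refine le_trans ?_ b1
      rw [e1, norm_mul, norm_mul, ← mul_assoc]
      exact mul_le_mul_of_nonneg_right n4 (norm_nonneg _)
    have b4 : (a ^ 2 + t ^ 2)⁻¹ ≤ max 1 (a ^ 2)⁻¹ * (1 + t ^ 2)⁻¹ := by
      rw [← div_eq_mul_inv, le_div_iff₀ (by positivity), inv_mul_le_iff₀ hpos]
      have m1 : 1 ≤ max 1 (a ^ 2)⁻¹ := le_max_left _ _
      have m2 : (a ^ 2)⁻¹ ≤ max 1 (a ^ 2)⁻¹ := le_max_right _ _
      have m3 : a ^ 2 * (a ^ 2)⁻¹ = 1 := mul_inv_cancel₀ (by positivity)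
      nlinarith [sq_nonneg t, sq_nonneg a, mul_le_mul_of_nonneg_left m2 (sq_nonneg a),
        mul_le_mul_of_nonneg_left m1 (sq_nonneg t)]
    have g1 : 0 ≤ Real.Gamma (a + 2) := (norm_nonneg _).trans b1
    have b5 : ‖Complex.Gamma w‖ ≤ Real.Gamma (a + 2) * (max 1 (a ^ 2)⁻¹ * (1 + t ^ 2)⁻¹) := by
      refine le_trans ?_ (mul_le_mul_of_nonneg_left b4 g1)
      rw [← div_eq_mul_inv, le_div_iff₀ hpos]; linarith
    rw [norm_mul]
    refine (mul_le_mul b5 b2 (norm_nonneg _) (by positivity)).trans (le_of_eq ?_)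
    rw [hC]; ring

/-- Mellin–Barnes. -/
lemma so5_barnes (s : ℂ) (c : ℝ) (hs : 0 < s.re) (hc0 : -s.re < c) (hc1 : c < 0)
    (x : ℝ) (hx : 0 < x) :
    ∫ t : ℝ, Complex.Gamma (s + ((c : ℂ) + t * I)) * Complex.Gamma (-((c : ℂ) + t * I)) *
      (x : ℂ) ^ ((c : ℂ) + t * I) = 2 * Real.pi * Complex.Gamma s * ((1 + x : ℝ) : ℂ) ^ (-s) := by
  have hG : Complex.Gamma s ≠ 0 := Complex.Gamma_ne_zero_of_re_pos hs
  have key : ∀ y : ℝ, mellin (fun x : ℝ => ((1 + x : ℝ) : ℂ) ^ (-s)) (((-c : ℝ) : ℂ) + y * I) =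
      Complex.Gamma (((-c : ℝ) : ℂ) + y * I) * Complex.Gamma (s - (((-c : ℝ) : ℂ) + y * I)) /
        Complex.Gamma s := fun y =>
    so5_mellin s _ (by simpa using hc1) (by simp; linarith)
  have h := mellinInv_mellin_eq (-c) (fun x : ℝ => ((1 + x : ℝ) : ℂ) ^ (-s)) hx
    (so5_mellinConv s _ (by simpa using hc1) (by simp; linarith)) ?_ ?_
  · rw [mellinInv] at h
    simp only [key] at h
    rw [← integral_neg_eq_self]
    have hpi : (Real.pi : ℂ) ≠ 0 := by exact_mod_cast Real.pi_ne_zero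
    rw [← h, Complex.real_smul]
    push_cast
    rw [show ∀ J : ℂ, 2 * (Real.pi : ℂ) * Complex.Gamma s * (1 / (2 * (Real.pi : ℂ)) * J) =
      Complex.Gamma s * J by intro J; field_simp, ← integral_const_mul]
    congr 1
    ext y
    rw [smul_eq_mul]
    field_simp
    ring_nf
  · rw [VerticalIntegrable]
    simp only [key]
    exact (so5_integrable s (-c) (by linarith) (by linarith)).div_const _
  · refine ContinuousAt.cpow (f := fun x : ℝ => ((1 + x : ℝ) : ℂ)) ?_ continuousAt_const ?_
    · fun_prop
    · left; simp; linarith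

lemma so5_term (s z : ℂ) (p : ℕ × ℕ) :
    ((p.1 + 1 : ℕ) : ℂ) ^ (-s) * ((p.2 + 1 : ℕ) : ℂ) ^ (-(s - z)) *
      ((p.1 + p.2 + 2 : ℕ) : ℂ) ^ (-(2 * s + z)) =
    (((p.1 + 1 : ℕ) : ℂ) ^ (-s) * ((p.2 + 1 : ℕ) : ℂ) ^ (-s) *
      ((p.1 + p.2 + 2 : ℕ) : ℂ) ^ (-(2 * s))) *
      ((((p.2 + 1 : ℕ) : ℝ) / ((p.1 + p.2 + 2 : ℕ) : ℝ) : ℝ) : ℂ) ^ z := by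
  have h1 : (0 : ℝ) < ((p.1 + 1 : ℕ) : ℝ) := by positivity
  have h2 : (0 : ℝ) < ((p.2 + 1 : ℕ) : ℝ) := by positivity
  have h3 : (0 : ℝ) < ((p.1 + p.2 + 2 : ℕ) : ℝ) := by positivity
  simp only [← Complex.ofReal_natCast]
  rw [so5_cpow_pos h1, so5_cpow_pos (div_pos h2 h3), so5_cpow_pos h2, so5_cpow_pos h3,
    so5_cpow_pos h2, so5_cpow_pos h3, Real.log_div h2.ne' h3.ne']
  simp only [← Complex.exp_add]
  congr 1
  push_cast
  ring

lemma so5_term2 (s : ℂ) (p : ℕ × ℕ) :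
    ((((p.1 + 1) * (p.2 + 1) * ((p.1 + 1) + (p.2 + 1)) *
      ((p.1 + 1) + 2 * (p.2 + 1)) : ℕ) : ℂ)) ^ (-s) =
    (((p.1 + 1 : ℕ) : ℂ) ^ (-s) * ((p.2 + 1 : ℕ) : ℂ) ^ (-s) *
      ((p.1 + p.2 + 2 : ℕ) : ℂ) ^ (-(2 * s))) *
      ((1 + ((p.2 + 1 : ℕ) : ℝ) / ((p.1 + p.2 + 2 : ℕ) : ℝ) : ℝ) : ℂ) ^ (-s) := by
  have h1 : (0 : ℝ) < ((p.1 + 1 : ℕ) : ℝ) := by positivity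
  have h2 : (0 : ℝ) < ((p.2 + 1 : ℕ) : ℝ) := by positivity
  have h3 : (0 : ℝ) < ((p.1 + p.2 + 2 : ℕ) : ℝ) := by positivity
  have h4 : (0 : ℝ) < 1 + ((p.2 + 1 : ℕ) : ℝ) / ((p.1 + p.2 + 2 : ℕ) : ℝ) := by positivity
  have h5 : (((p.1 + 1) * (p.2 + 1) * ((p.1 + 1) + (p.2 + 1)) *
      ((p.1 + 1) + 2 * (p.2 + 1)) : ℕ) : ℝ) = ((p.1 + 1 : ℕ) : ℝ) * ((p.2 + 1 : ℕ) : ℝ) *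
      (((p.1 + p.2 + 2 : ℕ) : ℝ) * ((p.1 + p.2 + 2 : ℕ) : ℝ)) *
      (1 + ((p.2 + 1 : ℕ) : ℝ) / ((p.1 + p.2 + 2 : ℕ) : ℝ)) := by
    rw [one_add_div h3.ne', ← mul_div_assoc, eq_div_iff h3.ne']
    push_cast
    ring
  simp only [← Complex.ofReal_natCast]
  rw [h5, so5_cpow_pos (by positivity), so5_cpow_pos h1, so5_cpow_pos h2, so5_cpow_pos h3,
    so5_cpow_pos h4, Real.log_mul (by positivity) h4.ne', Real.log_mul (by positivity) (by positivity),
    Real.log_mul h1.ne' h2.ne', Real.log_mul h3.ne' h3.ne']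
  simp only [← Complex.exp_add]
  congr 1
  push_cast
  ring

lemma so5_norm_bound (s z : ℂ) (hz : -s.re < z.re) (hz1 : z.re < 0) (hs : 0 < s.re) (p : ℕ × ℕ) :
    ‖((p.1 + 1 : ℕ) : ℂ) ^ (-s) * ((p.2 + 1 : ℕ) : ℂ) ^ (-(s - z)) *
      ((p.1 + p.2 + 2 : ℕ) : ℂ) ^ (-(2 * s + z))‖ ≤
    ((p.1 + 1 : ℕ) : ℝ) ^ (-s.re) * ((p.2 + 1 : ℕ) : ℝ) ^ (-s.re) := by
  rw [norm_mul, norm_mul, Complex.norm_natCast_cpow_of_pos (by positivity),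
    Complex.norm_natCast_cpow_of_pos (by positivity),
    Complex.norm_natCast_cpow_of_pos (by positivity)]
  refine (mul_le_of_le_one_right (by positivity) ?_).trans ?_
  · apply Real.rpow_le_one_of_one_le_of_nonpos
    · exact_mod_cast (by omega)
    · simp; linarith
  · simp only [Complex.neg_re, Complex.sub_re]
    apply mul_le_mul_of_nonneg_left _ (by positivity)
    apply Real.rpow_le_rpow_of_exponent_le
    · exact_mod_cast (by omega)
    · linarith

lemma so5_summable (σ : ℝ) (h : 1 < σ) : Summable fun p : ℕ × ℕ =>
    ((p.1 + 1 : ℕ) : ℝ) ^ (-σ) * ((p.2 + 1 : ℕ) : ℝ) ^ (-σ) := by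
  have h1 : Summable fun n : ℕ => ((n + 1 : ℕ) : ℝ) ^ (-σ) :=
    (summable_nat_add_iff 1).2 (Real.summable_nat_rpow.2 (by linarith))
  exact h1.mul_of_nonneg h1 (fun _ => by positivity) (fun _ => by positivity)

end Aux

theorem stmt10 (s : ℂ) (c : ℝ) (hs : 1 < s.re) (hc0 : -s.re < c) (hc1 : c < 0) :
    zetaSO5 s =
      (6 : ℂ) ^ s / (2 * Real.pi * Complex.Gamma s) *
        ∫ t : ℝ, Complex.Gamma (s + ((c : ℂ) + t * Complex.I)) *
          Complex.Gamma (-((c : ℂ) + t * Complex.I)) *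
          zetaMT s (s - ((c : ℂ) + t * Complex.I)) (2 * s + ((c : ℂ) + t * Complex.I)) := by
  have hs0 : 0 < s.re := by linarith
  have hG : Complex.Gamma s ≠ 0 := Complex.Gamma_ne_zero_of_re_pos hs0
  have hpi : (Real.pi : ℂ) ≠ 0 := by exact_mod_cast Real.pi_ne_zero
  set G : ℝ → ℂ := fun t => Complex.Gamma (s + ((c : ℂ) + t * Complex.I)) *
          Complex.Gamma (-((c : ℂ) + t * Complex.I)) with hGdef
  have hGint : MeasureTheory.Integrable G := by
    have h := (so5_integrable s (-c) (by linarith) (by linarith)).comp_neg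
    convert! h using 2 with t
    rw [hGdef]
    simp only
    rw [mul_comm]
    push_cast
    congr 2 <;> ring
  set a : ℕ × ℕ → ℂ → ℂ := fun p z => ((p.1 + 1 : ℕ) : ℂ) ^ (-s) *
    ((p.2 + 1 : ℕ) : ℂ) ^ (-(s - z)) * ((p.1 + p.2 + 2 : ℕ) : ℂ) ^ (-(2 * s + z)) with ha
  have hbound : ∀ (p : ℕ × ℕ) (t : ℝ), ‖a p ((c : ℂ) + t * Complex.I)‖ ≤
      ((p.1 + 1 : ℕ) : ℝ) ^ (-s.re) * ((p.2 + 1 : ℕ) : ℝ) ^ (-s.re) := fun p t =>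
    so5_norm_bound s _ (by simpa using hc0) (by simpa using hc1) hs0 p
  have hcont : ∀ p : ℕ × ℕ, Continuous fun t : ℝ => a p ((c : ℂ) + t * Complex.I) := by
    intro p
    have e1 : ((p.2 + 1 : ℕ) : ℂ) ≠ 0 := Nat.cast_ne_zero.2 (by omega)
    have e2 : ((p.1 + p.2 + 2 : ℕ) : ℂ) ≠ 0 := Nat.cast_ne_zero.2 (by omega)
    refine (continuous_const.mul ?_).mul ?_
    · exact Continuous.const_cpow (by fun_prop) (Or.inl e1)
    · exact Continuous.const_cpow (by fun_prop) (Or.inl e2)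
  have hFint : ∀ p : ℕ × ℕ,
      MeasureTheory.Integrable fun t : ℝ => G t * a p ((c : ℂ) + t * Complex.I) := fun p =>
    hGint.mul_bdd (hcont p).aestronglyMeasurable (Filter.Eventually.of_forall (hbound p))
  have hsum : Summable fun p : ℕ × ℕ => ∫ t : ℝ, ‖G t * a p ((c : ℂ) + t * Complex.I)‖ := by
    refine Summable.of_nonneg_of_le (fun p => MeasureTheory.integral_nonneg fun t => norm_nonneg _)
      (fun p => ?_) ((so5_summable s.re hs).mul_left (∫ t, ‖G t‖))
    rw [← MeasureTheory.integral_mul_const]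
    refine MeasureTheory.integral_mono (hFint p).norm (hGint.norm.mul_const _) fun t => ?_
    simp only [norm_mul (G t)]
    exact mul_le_mul_of_nonneg_left (hbound p t) (norm_nonneg _)
  have hmain := (MeasureTheory.hasSum_integral_of_summable_integral_norm hFint hsum).tsum_eq
  have hterm : ∀ p : ℕ × ℕ, ∫ t : ℝ, G t * a p ((c : ℂ) + t * Complex.I) =
      2 * Real.pi * Complex.Gamma s * ((((p.1 + 1) * (p.2 + 1) * ((p.1 + 1) + (p.2 + 1)) *
      ((p.1 + 1) + 2 * (p.2 + 1)) : ℕ) : ℂ)) ^ (-s) := by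
    intro p
    have hx : (0 : ℝ) < ((p.2 + 1 : ℕ) : ℝ) / ((p.1 + p.2 + 2 : ℕ) : ℝ) := by positivity
    rw [so5_term2, mul_left_comm, ← so5_barnes s c hs0 hc0 hc1 _ hx,
      ← MeasureTheory.integral_const_mul]
    congr 1
    ext t
    simp only [ha, hGdef]
    rw [so5_term]
    ring
  simp only [hterm, tsum_mul_left] at hmain
  have hz : ∀ t : ℝ, G t * zetaMT s (s - ((c : ℂ) + t * Complex.I))
      (2 * s + ((c : ℂ) + t * Complex.I)) = ∑' p, G t * a p ((c : ℂ) + t * Complex.I) := by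
    intro t
    rw [tsum_mul_left, zetaMT]
  change zetaSO5 s = _ * ∫ t : ℝ, G t * zetaMT s (s - ((c : ℂ) + t * Complex.I))
      (2 * s + ((c : ℂ) + t * Complex.I))
  simp only [hz]
  simp only [tsum_mul_left]
  rw [← hmain, zetaSO5]
  field_simp
end
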